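/- arXiv:2409.17724 — 3 statements merged into one kernel-verified Lean document; each statement's English description precedes it below -/
import Mathlib

section
/- If a graph G of order n has fewer than (11/5)n - 18/5 edges, then G has a forest cut. -/
/-- `S` is a vertex cut of `G`: some two vertices outside of `S` lie in
different connected components of `G - S`. -/
def IsVertexCut {V : Type*} (G : SimpleGraph V) (S : Set V) : Prop :=
  ∃ a b : ↥(Sᶜ), ¬ (G.induce Sᶜ).Reachable a b

/-- A forest cut is a vertex cut whose induced subgraph is a forest. -/
def IsForestCut {V : Type*} (G : SimpleGraph V) (S : Set V) : Prop :=
  IsVertexCut G S ∧ (G.induce S).IsAcyclic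

/-!
Induct on the order `n`, keeping track of `5 e - 11 n`. If the neighbourhood of a vertex, or the
outer boundary of an edge, induces a forest and does not exhaust the rest of the graph, it is a
forest cut. Otherwise it contains a short cycle, and if it is small and dense enough one can delete
the vertex (or both ends of the edge) and add a few edges that make the boundary a clique. A forest
cut of the smaller graph then cannot separate the boundary, so it also cuts the original graph. The
one configuration where this costs too many edges is a vertex `v` whose neighbourhood is an induced
4-cycle `abcd`: there only the edge `ac` is added. A forest cut of the smaller graph that separates
`b` from `d` contains `a` and `c`, and putting `v` back into it subdivides `ac`, which keeps it a
forest.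

These reductions pay off at vertices of degree at most 3, at vertices of degree 4 without a triangle
of neighbours, and at adjacent vertices of degree 4 in a common `K₄`. If none of them applies, every
vertex of degree 4 sees a triangle of vertices of degree at least 5. Each vertex of such a triangle
has two neighbours in it, so counting the edges between the vertices of degree 4 and the others
gives `11 n ≤ 5 e`.
-/

section ForestCuts

open SimpleGraph

variable {V : Type*} {G H : SimpleGraph V}

section InducedForests

variable {S T : Set V} {v : V}

theorem isAcyclic_induce_mono (hST : S ⊆ T) (hGH : G ≤ H) (hT : (H.induce T).IsAcyclic) :
    (G.induce S).IsAcyclic :=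
  (hT.embedding (induceHomOfLE H hST)).anti fun _ _ hadj ↦ hGH hadj

theorem isAcyclic_induce_iff :
    (G.induce S).IsAcyclic ↔ ∀ u, ∀ p : G.Walk u u, p.IsCycle → ∃ x ∈ p.support, x ∉ S := by
  refine ⟨fun hS u p hp ↦ ?_, fun hS u p hp ↦ ?_⟩
  · by_contra! hpS
    refine hS (p.induce S hpS) ?_
    rwa [← Walk.isCycle_map_iff_of_injective (f := (Embedding.induce S).toHom)
      Subtype.val_injective, Walk.map_induce]
  · obtain ⟨x, hx, hxS⟩ := hS _ _ (hp.map (f := (Embedding.induce S).toHom)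
      Subtype.val_injective)
    obtain ⟨y, -, rfl⟩ := List.mem_map.1 (Walk.support_map _ p ▸ hx)
    exact hxS y.2

theorem exists_reachable_induce_of_isCycle {p : G.Walk v v} (hp : p.IsCycle)
    (hpS : ∀ x ∈ p.support, x ∈ insert v S) :
    ∃ x y : S, x ≠ y ∧ G.Adj v x ∧ G.Adj v y ∧ (G.induce S).Reachable x y := by
  cases p with
  | nil => exact absurd hp Walk.not_isCycle_nil
  | @cons _ x _ hvx q =>
    obtain ⟨hq, hvx_notMem⟩ := (Walk.cons_isCycle_iff q hvx).1 hp
    have hq_not_nil : ¬ q.Nil := Walk.not_nil_of_ne hvx.ne'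
    have hqS : ∀ z ∈ q.dropLast.support, z ∈ S := by
      intro z hz
      have hnodup := hq.support_nodup
      rw [← Walk.support_dropLast_concat hq_not_nil, List.nodup_append] at hnodup
      have hzq : z ∈ q.support := by
        rw [← Walk.support_dropLast_concat hq_not_nil]
        simp [hz]
      exact (hpS z (by simp [hzq])).resolve_left (hnodup.2.2 z hz v (by simp))
    refine ⟨_, _, fun hxy ↦ hvx_notMem ?_, hvx, (q.adj_penultimate hq_not_nil).symm,
      (q.dropLast.induce S hqS).reachable⟩
    have hmem := Walk.mk_penultimate_end_mem_edges hq_not_nil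
    rwa [← show x = q.penultimate from congrArg Subtype.val hxy, Sym2.eq_swap] at hmem

theorem isAcyclic_induce_insert (hS : (G.induce S).IsAcyclic)
    (hv : ∀ x y : S, G.Adj v x → G.Adj v y → (G.induce S).Reachable x y → x = y) :
    (G.induce (insert v S)).IsAcyclic := by
  classical
  refine isAcyclic_induce_iff.2 fun u p hp ↦ ?_
  by_contra! hpS
  by_cases hvp : v ∈ p.support
  · obtain ⟨x, y, hxy, hvx, hvy, hreach⟩ := exists_reachable_induce_of_isCycle (hp.rotate hvp)
      fun x hx ↦ hpS x ((p.mem_support_rotate_iff v hvp).1 hx)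
    exact hxy (hv x y hvx hvy hreach)
  · obtain ⟨x, hx, hxS⟩ := isAcyclic_induce_iff.1 hS u p hp
    exact hxS ((hpS x hx).resolve_left fun hxv ↦ hvp (hxv ▸ hx))

theorem isAcyclic_induce_insert_of_subsingleton (hS : (G.induce S).IsAcyclic)
    (hv : (S ∩ G.neighborSet v).Subsingleton) : (G.induce (insert v S)).IsAcyclic :=
  isAcyclic_induce_insert hS fun x y hx hy _ ↦ Subtype.ext (hv ⟨x.2, hx⟩ ⟨y.2, hy⟩)

theorem not_reachable_induce_of_isAcyclic_sup_edge {a c : S} (hac : a ≠ c)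
    (hadj : ¬ G.Adj a c) (hS : ((G ⊔ edge (a : V) c).induce S).IsAcyclic) :
    ¬ (G.induce S).Reachable a c := by
  have hle : G.induce S ⊔ edge a c ≤ (G ⊔ edge (a : V) c).induce S := by
    intro x y
    simp [edge_adj, Subtype.ext_iff]
  intro hreach
  exact ((isAcyclic_sup_fromEdgeSet_iff.1 (hS.anti hle)).2 hreach).elim hac hadj

theorem isAcyclic_induce_pair (b c : V) : (G.induce {b, c}).IsAcyclic :=
  IsAcyclic.of_card_le_two ((Set.encard_insert_le _ _).trans (by
    rw [Set.encard_singleton, one_add_one_eq_two]))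

theorem isAcyclic_induce_insert_insert_pair {b c d e : V} (hd : ¬ (G.Adj d b ∧ G.Adj d c))
    (he : ¬ (G.Adj e b ∧ G.Adj e c))
    (hde : ¬ (G.Adj d e ∧ (G.Adj d b ∨ G.Adj d c) ∧ (G.Adj e b ∨ G.Adj e c))) :
    (G.induce {d, e, b, c}).IsAcyclic := by
  have hforest_insert {x : V} (hx : ¬ (G.Adj x b ∧ G.Adj x c)) :
      (G.induce {x, b, c}).IsAcyclic := by
    refine isAcyclic_induce_insert_of_subsingleton (isAcyclic_induce_pair b c) ?_
    rintro y ⟨hy, hxy⟩ z ⟨hz, hxz⟩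
    simp only [Set.mem_insert_iff, Set.mem_singleton_iff, mem_neighborSet] at *
    grind
  by_cases hde' : G.Adj d e ∧ (G.Adj d b ∨ G.Adj d c)
  · rw [Set.insert_comm]
    refine isAcyclic_induce_insert_of_subsingleton (hforest_insert hd) ?_
    rintro y ⟨hy, hey⟩ z ⟨hz, hez⟩
    simp only [Set.mem_insert_iff, Set.mem_singleton_iff, mem_neighborSet] at *
    grind
  · refine isAcyclic_induce_insert_of_subsingleton (hforest_insert he) ?_
    rintro y ⟨hy, hdy⟩ z ⟨hz, hdz⟩
    simp only [Set.mem_insert_iff, Set.mem_singleton_iff, mem_neighborSet] at *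
    grind

theorem exists_isClique_sup_fromEdgeSet {b c d e : V} (hbc : G.Adj b c) (hde : G.Adj d e)
    (hd : G.Adj d b ∨ G.Adj d c) (he : G.Adj e b ∨ G.Adj e c) :
    ∃ E : Set (Sym2 V), E.ncard ≤ 2 ∧ (G ⊔ fromEdgeSet E).IsClique {d, e, b, c} := by
  have hpair (p q : Sym2 V) : ({p, q} : Set (Sym2 V)).ncard ≤ 2 :=
    (Set.ncard_insert_le _ _).trans (by rw [Set.ncard_singleton])
  rcases hd with hdb | hdc <;> rcases he with heb | hec
  · exact ⟨{s(d, c), s(e, c)}, hpair _ _, by simp +contextual [isClique_insert, *]⟩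
  · exact ⟨{s(d, c), s(e, b)}, hpair _ _, by simp +contextual [isClique_insert, *]⟩
  · exact ⟨{s(d, b), s(e, c)}, hpair _ _, by simp +contextual [isClique_insert, *]⟩
  · exact ⟨{s(d, b), s(e, b)}, hpair _ _, by simp +contextual [isClique_insert, *]⟩

end InducedForests

section SmallCycles

variable {T : Finset V}

theorem exists_cycleGraph_embedding_of_not_isAcyclic_induce
    (hT : ¬ (G.induce (T : Set V)).IsAcyclic) :
    ∃ n, 3 ≤ n ∧ n ≤ T.card ∧ ∃ f : Fin n ↪ V,
      (∀ i, f i ∈ T) ∧ ∀ i j, (cycleGraph n).Adj i j → G.Adj (f i) (f j) := by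
  rw [isAcyclic_iff_free_cycleGraph] at hT
  push Not at hT
  obtain ⟨n, hn, ⟨f⟩⟩ := hT
  refine ⟨n, hn, ?_, f.toEmbedding.trans (Function.Embedding.subtype _), fun i ↦ (f i).2,
    fun i j hij ↦ f.toHom.map_adj hij⟩
  simpa using Fintype.card_le_of_injective f f.injective

theorem exists_isNClique_three_or_fourCycle_of_not_isAcyclic_induce [DecidableEq V]
    (hcard : T.card ≤ 4) (hT : ¬ (G.induce (T : Set V)).IsAcyclic) :
    (∃ s ⊆ T, G.IsNClique 3 s) ∨ ∃ a b c d, a ≠ c ∧ b ≠ d ∧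
      G.Adj a b ∧ G.Adj b c ∧ G.Adj c d ∧ G.Adj d a ∧ T = {a, b, c, d} := by
  obtain ⟨n, hn, hnT, f, hfT, hf⟩ := exists_cycleGraph_embedding_of_not_isAcyclic_induce hT
  obtain rfl | rfl : n = 3 ∨ n = 4 := by lia
  · exact .inl ⟨{f 0, f 1, f 2}, by simp [Finset.insert_subset_iff, hfT], is3Clique_triple_iff.2
      ⟨hf 0 1 (by decide), hf 0 2 (by decide), hf 1 2 (by decide)⟩⟩
  · exact .inr ⟨f 0, f 1, f 2, f 3, by simp, by simp, hf 0 1 (by decide), hf 1 2 (by decide),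
      hf 2 3 (by decide), hf 3 0 (by decide), .symm <| Finset.eq_of_subset_of_card_le
        (by simp [Finset.insert_subset_iff, hfT]) (by simpa using hcard)⟩

theorem isNClique_three_of_not_isAcyclic_induce (hcard : T.card ≤ 3)
    (hT : ¬ (G.induce (T : Set V)).IsAcyclic) : G.IsNClique 3 T := by
  classical
  rcases exists_isNClique_three_or_fourCycle_of_not_isAcyclic_induce (by lia) hT with
    ⟨s, hsT, hs⟩ | ⟨a, b, c, d, hac, hbd, hab, hbc, hcd, hda, rfl⟩
  · rwa [← Finset.eq_of_subset_of_card_le hsT (by rwa [hs.card_eq])]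
  · have hfour : ({a, b, c, d} : Finset V).card = 4 := by
      simp [*, hab.ne, hbc.ne, hcd.ne, hda.ne']
    lia

end SmallCycles

section Separations

variable {K : SimpleGraph V} {A B T X N : Set V} {v x : V}

/-- A graph that has some forest cut. -/
def HasForestCut (G : SimpleGraph V) : Prop :=
  ∃ S : Set V, IsForestCut G S

/-- `A` and `B` are nonempty, disjoint and not joined by any edge, so that the vertices outside
`A ∪ B` form a vertex cut. -/
structure IsSeparation (G : SimpleGraph V) (A B : Set V) : Prop where
  left_nonempty : A.Nonempty
  right_nonempty : B.Nonempty
  disjoint : Disjoint A B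
  not_adj : ∀ a ∈ A, ∀ b ∈ B, ¬ G.Adj a b

/-- The vertices outside `X` that have a neighbour in `X`. -/
def outerBoundary (G : SimpleGraph V) (X : Set V) : Set V :=
  {y | y ∉ X ∧ ∃ x ∈ X, G.Adj x y}

theorem outerBoundary_singleton : outerBoundary G {v} = G.neighborSet v := by
  ext y
  simp only [outerBoundary, Set.mem_singleton_iff, exists_eq_left, Set.mem_ofPred_eq,
    mem_neighborSet, and_iff_right_iff_imp]
  exact fun hvy ↦ hvy.ne'

namespace IsSeparation

theorem symm (h : IsSeparation G A B) : IsSeparation G B A :=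
  ⟨h.right_nonempty, h.left_nonempty, h.disjoint.symm, fun b hb a ha hba ↦
    h.not_adj a ha b hb hba.symm⟩

theorem mono (hGH : G ≤ H) (h : IsSeparation H A B) : IsSeparation G A B :=
  { h with not_adj := fun a ha b hb hab ↦ h.not_adj a ha b hb (hGH hab) }

theorem union_left (h : IsSeparation G A B) (hXB : Disjoint X B)
    (hboundary : Disjoint B (outerBoundary G X)) : IsSeparation G (A ∪ X) B where
  left_nonempty := h.left_nonempty.inl
  right_nonempty := h.right_nonempty
  disjoint := h.disjoint.union_left hXB
  not_adj x hx b hb hxb := hx.elim (fun hxA ↦ h.not_adj x hxA b hb hxb) fun hxX ↦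
    hboundary.le_bot ⟨hb, fun hbX ↦ hXB.le_bot ⟨hbX, hb⟩, x, hxX, hxb⟩

theorem of_outerBoundary (hX : X.Nonempty) (hcompl : X ∪ outerBoundary G X ≠ Set.univ) :
    IsSeparation G X (X ∪ outerBoundary G X)ᶜ where
  left_nonempty := hX
  right_nonempty := Set.nonempty_compl.2 hcompl
  disjoint := Set.disjoint_compl_right_iff_subset.2 Set.subset_union_left
  not_adj x hx _ hy hxy := hy (.inr ⟨fun hyX ↦ hy (.inl hyX), x, hx, hxy⟩)

theorem notMem_union (h : IsSeparation G A B) (hA : (A ∩ N).Nonempty) (hB : (B ∩ N).Nonempty)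
    (hx : ∀ y ∈ N, y ≠ x → G.Adj x y) : x ∉ A ∪ B := by
  obtain ⟨a, haA, haN⟩ := hA
  obtain ⟨b, hbB, hbN⟩ := hB
  rintro (hxA | hxB)
  · exact h.not_adj x hxA b hbB (hx b hbN (h.disjoint.ne_of_mem hxA hbB).symm)
  · exact h.not_adj a haA x hxB (hx a haN (h.disjoint.ne_of_mem haA hxB)).symm

theorem mem_of_reachable_induce (h : IsSeparation G A B) {u w : ↥(A ∪ B)}
    (huw : (G.induce (A ∪ B)).Reachable u w) (hu : (u : V) ∈ A) : (w : V) ∈ A := by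
  obtain ⟨p⟩ := huw
  induction p with
  | nil => exact hu
  | @cons _ y _ huy _ ih => exact ih (y.2.resolve_right fun hyB ↦ h.not_adj _ hu _ hyB huy)

theorem hasForestCut (h : IsSeparation G A B) (hforest : (G.induce (A ∪ B)ᶜ).IsAcyclic) :
    HasForestCut G := by
  obtain ⟨a, ha⟩ := h.left_nonempty
  obtain ⟨b, hb⟩ := h.right_nonempty
  refine ⟨(A ∪ B)ᶜ, ?_, hforest⟩
  rw [IsVertexCut, compl_compl]
  exact ⟨⟨a, .inl ha⟩, ⟨b, .inr hb⟩, fun hreach ↦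
    h.disjoint.le_bot ⟨h.mem_of_reachable_induce hreach ha, hb⟩⟩

theorem hasForestCut_of_disjoint_outerBoundary (hGK : G ≤ K) (h : IsSeparation K A B)
    (hAB : A ∪ B ⊆ Xᶜ) (hforest : (K.induce (Xᶜ \ (A ∪ B))).IsAcyclic)
    (hB : Disjoint B (outerBoundary G X)) : HasForestCut G := by
  have hXB : Disjoint X B := Set.disjoint_left.2 fun x hxX hxB ↦ hAB (.inr hxB) hxX
  refine ((h.mono hGK).union_left hXB hB).hasForestCut (isAcyclic_induce_mono ?_ hGK hforest)
  simp only [Set.compl_union, Set.sdiff_eq]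
  tauto_set

end IsSeparation

theorem exists_isSeparation_of_hasForestCut_induce (hT : HasForestCut (G.induce T)) :
    ∃ A B, A ∪ B ⊆ T ∧ IsSeparation G A B ∧ (G.induce (T \ (A ∪ B))).IsAcyclic := by
  obtain ⟨S, ⟨a, b, hab⟩, hS⟩ := hT
  let C : Set ↥Sᶜ := {x | ((G.induce T).induce Sᶜ).Reachable a x}
  let toV : ↥Sᶜ → V := fun x ↦ x
  have htoV : toV.Injective := Subtype.val_injective.comp Subtype.val_injective
  have hunion : toV '' C ∪ toV '' Cᶜ = Set.range toV := by
    rw [← Set.image_union, Set.union_compl_self, Set.image_univ]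
  refine ⟨toV '' C, toV '' Cᶜ, ?_, ⟨?_, ?_, ?_, ?_⟩, ?_⟩
  · rw [hunion]
    exact Set.range_subset_iff.2 fun x ↦ x.1.2
  · exact ⟨a, a, .refl a, rfl⟩
  · exact ⟨b, b, hab, rfl⟩
  · exact (Set.disjoint_image_iff htoV).2 disjoint_compl_right
  · rintro _ ⟨x, hx, rfl⟩ _ ⟨y, hy, rfl⟩ hxy
    exact hy (hx.trans (Adj.reachable hxy))
  · rw [hunion]
    have hmem (x : ↥(T \ Set.range toV)) : (⟨x, x.2.1⟩ : T) ∈ S :=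
      not_not.1 fun hx ↦ x.2.2 ⟨⟨_, hx⟩, rfl⟩
    exact hS.comap ⟨fun x ↦ ⟨_, hmem x⟩, id⟩ fun x y hxy ↦
      Subtype.ext (congrArg (fun z : S ↦ (z : V)) hxy)

theorem hasForestCut_of_outerBoundary_subset [Finite V] (hX : X.Nonempty)
    (hN : outerBoundary G X ⊆ N) (hcard : X.ncard + N.ncard < Nat.card V)
    (hforest : (G.induce N).IsAcyclic) : HasForestCut G := by
  have hcompl : X ∪ outerBoundary G X ≠ Set.univ := fun huniv ↦ by
    have hle := (Set.ncard_le_ncard (Set.union_subset_union_right X hN)).trans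
      (Set.ncard_union_le X N)
    rw [huniv, Set.ncard_univ] at hle
    lia
  refine (IsSeparation.of_outerBoundary hX hcompl).hasForestCut
    (isAcyclic_induce_mono (fun y hy ↦ hN ?_) le_rfl hforest)
  rw [Set.mem_compl_iff, Set.mem_union, not_or, Set.notMem_compl_iff] at hy
  exact hy.2.resolve_left hy.1

theorem hasForestCut_or_exists_isSeparation (hGK : G ≤ K) (hK : HasForestCut (K.induce Xᶜ)) :
    HasForestCut G ∨ ∃ A B, IsSeparation K A B ∧ (K.induce (Xᶜ \ (A ∪ B))).IsAcyclic ∧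
      (A ∩ outerBoundary G X).Nonempty ∧ (B ∩ outerBoundary G X).Nonempty := by
  obtain ⟨A, B, hAB, hsep, hforest⟩ := exists_isSeparation_of_hasForestCut_induce hK
  by_cases hB : Disjoint B (outerBoundary G X)
  · exact .inl (hsep.hasForestCut_of_disjoint_outerBoundary hGK hAB hforest hB)
  by_cases hA : Disjoint A (outerBoundary G X)
  · rw [Set.union_comm] at hAB hforest
    exact .inl (hsep.symm.hasForestCut_of_disjoint_outerBoundary hGK hAB hforest hA)
  · rw [Set.not_disjoint_iff_nonempty_inter] at hA hB
    exact .inr ⟨A, B, hsep, hforest, hA, hB⟩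

theorem hasForestCut_of_isClique_outerBoundary (hGK : G ≤ K)
    (hclique : K.IsClique (outerBoundary G X)) (hK : HasForestCut (K.induce Xᶜ)) :
    HasForestCut G := by
  obtain hG | ⟨A, B, hsep, -, hA, hB⟩ := hasForestCut_or_exists_isSeparation hGK hK
  · exact hG
  · obtain ⟨a, haA, ha⟩ := id hA
    exact absurd (.inl haA) (hsep.notMem_union hA hB fun y hy hya ↦ hclique ha hy hya.symm)

theorem hasForestCut_of_neighborSet_eq_fourCycle {a b c d : V}
    (hN : G.neighborSet v = {a, b, c, d}) (hac : a ≠ c) (hnac : ¬ G.Adj a c)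
    (hab : G.Adj a b) (hbc : G.Adj b c) (hcd : G.Adj c d) (hda : G.Adj d a)
    (hK : HasForestCut ((G ⊔ edge a c).induce {v}ᶜ)) : HasForestCut G := by
  obtain hG | ⟨A, B, hsep, hforest, hA, hB⟩ := hasForestCut_or_exists_isSeparation le_sup_left hK
  · exact hG
  rw [outerBoundary_singleton, hN] at hA hB
  have hva : a ≠ v := (show G.Adj v a from hN.ge (by simp)).ne'
  have hvc : c ≠ v := (show G.Adj v c from hN.ge (by simp)).ne'
  have ha : a ∉ A ∪ B := hsep.notMem_union hA hB (by simp [edge_adj, hac, hab, hda.symm])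
  have hc : c ∉ A ∪ B := hsep.notMem_union hA hB (by simp [edge_adj, hac.symm, hbc.symm, hcd])
  have hbd : b ∈ A ∪ B ∧ d ∈ A ∪ B := by
    obtain ⟨x, hxA, hx⟩ := hA
    obtain ⟨y, hyB, hy⟩ := hB
    have hxy := hsep.disjoint.ne_of_mem hxA hyB
    simp only [Set.mem_insert_iff, Set.mem_singleton_iff, Set.mem_union] at *
    grind
  set S := {v}ᶜ \ (A ∪ B)
  have hcompl : (A ∪ B)ᶜ ⊆ insert v S := fun x hx ↦ or_iff_not_imp_left.2 fun hxv ↦ ⟨hxv, hx⟩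
  have hnreach : ¬ (G.induce S).Reachable ⟨a, hva, ha⟩ ⟨c, hvc, hc⟩ :=
    not_reachable_induce_of_isAcyclic_sup_edge (ne_of_apply_ne Subtype.val hac) hnac hforest
  have hadj (x : S) (hx : G.Adj v x) : x = ⟨a, hva, ha⟩ ∨ x = ⟨c, hvc, hc⟩ := by
    have hxS := x.2.2
    have hxN : (x : V) ∈ ({a, b, c, d} : Set V) := hN.le hx
    grind
  refine (hsep.mono le_sup_left).hasForestCut (isAcyclic_induce_mono hcompl le_rfl
    (isAcyclic_induce_insert (isAcyclic_induce_mono subset_rfl le_sup_left hforest) ?_))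
  intro x y hx hy hxy
  obtain rfl | rfl := hadj x hx <;> obtain rfl | rfl := hadj y hy
  exacts [rfl, absurd hxy hnreach, absurd hxy.symm hnreach, rfl]

end Separations

section Reducibility

variable {X : Set V} {E : Set (Sym2 V)} {v : V}

/-- `G` has a forest cut, or a nonempty set `X` of vertices can be traded for a graph `K` on the
remaining ones whose forest cuts lead back to forest cuts of `G`, with the number of edges dropping
by at least `11 / 5` per vertex of `X`. -/
def IsReducible (G : SimpleGraph V) : Prop :=
  HasForestCut G ∨ ∃ (X : Set V) (K : SimpleGraph V), X.Nonempty ∧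
    5 * (K.induce Xᶜ).edgeSet.ncard + 11 * X.ncard ≤ 5 * G.edgeSet.ncard ∧
    (HasForestCut (K.induce Xᶜ) → HasForestCut G)

theorem ncard_edgeSet_induce_compl_add_le [Finite V] (G : SimpleGraph V) (X : Set V)
    (E : Set (Sym2 V)) :
    ((G ⊔ fromEdgeSet E).induce Xᶜ).edgeSet.ncard + (⋃ x ∈ X, G.incidenceSet x).ncard ≤
      G.edgeSet.ncard + E.ncard := by
  let toV : Sym2 ↥Xᶜ → Sym2 V := Sym2.map (↑)
  have hsub : toV '' ((G ⊔ fromEdgeSet E).induce Xᶜ).edgeSet ⊆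
      (G.edgeSet \ ⋃ x ∈ X, G.incidenceSet x) ∪ E := by
    rintro _ ⟨⟨x, y⟩, hxy, rfl⟩
    refine hxy.imp (fun hadj ↦ ⟨hadj, fun hinc ↦ ?_⟩) fun hE ↦ hE.1
    obtain ⟨z, hzX, -, hz⟩ := Set.mem_iUnion₂.1 hinc
    obtain rfl | rfl := Sym2.mem_iff.1 hz
    exacts [x.2 hzX, y.2 hzX]
  have hinc : (⋃ x ∈ X, G.incidenceSet x) ⊆ G.edgeSet :=
    Set.iUnion₂_subset fun x _ ↦ G.incidenceSet_subset x
  calc ((G ⊔ fromEdgeSet E).induce Xᶜ).edgeSet.ncard + (⋃ x ∈ X, G.incidenceSet x).ncard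
      = (toV '' ((G ⊔ fromEdgeSet E).induce Xᶜ).edgeSet).ncard +
          (⋃ x ∈ X, G.incidenceSet x).ncard := by
        rw [Set.ncard_image_of_injective _ (Sym2.map.injective Subtype.val_injective)]
    _ ≤ (G.edgeSet \ ⋃ x ∈ X, G.incidenceSet x).ncard + E.ncard +
          (⋃ x ∈ X, G.incidenceSet x).ncard := by
        gcongr
        exact (Set.ncard_le_ncard hsub).trans (Set.ncard_union_le _ _)
    _ = G.edgeSet.ncard + E.ncard := by
        rw [add_right_comm, Set.ncard_sdiff_add_ncard_of_subset hinc]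

theorem ncard_incidenceSet [Fintype V] [DecidableRel G.Adj] (v : V) :
    (G.incidenceSet v).ncard = G.degree v := by
  classical
  rw [Set.ncard_eq_toFinset_card', Set.toFinset_card, card_incidenceSet_eq_degree]

theorem ncard_incidenceSet_union_add_one [Fintype V] [DecidableRel G.Adj] {a : V}
    (hva : G.Adj v a) :
    (G.incidenceSet v ∪ G.incidenceSet a).ncard + 1 = G.degree v + G.degree a := by
  rw [← ncard_incidenceSet, ← ncard_incidenceSet, ← Set.ncard_union_add_ncard_inter,
    G.incidenceSet_inter_incidenceSet_of_adj hva, Set.ncard_singleton]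

theorem exists_neighborSet_eq_insert [Fintype V] [DecidableRel G.Adj] {T : Finset V}
    (hT : T ⊆ G.neighborFinset v) (hcard : T.card + 1 = G.degree v) :
    ∃ d, G.neighborSet v = insert d ↑T := by
  classical
  obtain ⟨d, -, hd⟩ := Finset.exists_eq_insert_iff.2 ⟨hT, hcard⟩
  exact ⟨d, by rw [← coe_neighborFinset, ← hd, Finset.coe_insert]⟩

namespace IsReducible

theorem of_lift [Finite V] (hX : X.Nonempty)
    (hcard : 11 * X.ncard + 5 * E.ncard ≤ 5 * (⋃ x ∈ X, G.incidenceSet x).ncard)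
    (hlift : HasForestCut ((G ⊔ fromEdgeSet E).induce Xᶜ) → HasForestCut G) : IsReducible G := by
  have hedges := ncard_edgeSet_induce_compl_add_le G X E
  exact .inr ⟨X, _, hX, by lia, hlift⟩

theorem of_isClique_outerBoundary [Finite V] (hX : X.Nonempty)
    (hcard : 11 * X.ncard + 5 * E.ncard ≤ 5 * (⋃ x ∈ X, G.incidenceSet x).ncard)
    (hclique : (G ⊔ fromEdgeSet E).IsClique (outerBoundary G X)) : IsReducible G :=
  of_lift hX hcard (hasForestCut_of_isClique_outerBoundary le_sup_left hclique)

theorem of_isClique_neighborSet [Fintype V] [DecidableRel G.Adj]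
    (hcard : 11 + 5 * E.ncard ≤ 5 * G.degree v)
    (hclique : (G ⊔ fromEdgeSet E).IsClique (G.neighborSet v)) : IsReducible G := by
  refine of_isClique_outerBoundary (Set.singleton_nonempty v) ?_ (outerBoundary_singleton ▸ hclique)
  simpa [ncard_incidenceSet] using hcard

theorem of_isAcyclic_neighborSet [Fintype V] [DecidableRel G.Adj]
    (hcard : G.degree v + 1 < Fintype.card V) (hforest : (G.induce (G.neighborSet v)).IsAcyclic) :
    IsReducible G := by
  refine .inl (hasForestCut_of_outerBoundary_subset (Set.singleton_nonempty v)
    outerBoundary_singleton.subset ?_ hforest)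
  rwa [Set.ncard_singleton, ← coe_neighborFinset, Set.ncard_coe_finset,
    card_neighborFinset_eq_degree, Nat.card_eq_fintype_card, add_comm]

variable [Fintype V] [DecidableRel G.Adj]

theorem of_degree_le_three (hdeg : G.degree v ≤ 3) (hcard : G.degree v + 1 < Fintype.card V) :
    IsReducible G := by
  by_cases hforest : (G.induce (G.neighborSet v)).IsAcyclic
  · exact of_isAcyclic_neighborSet hcard hforest
  rw [← coe_neighborFinset] at hforest
  have hclique := isNClique_three_of_not_isAcyclic_induce
    ((G.card_neighborFinset_eq_degree v).trans_le hdeg) hforest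
  refine of_isClique_neighborSet (v := v) (E := ∅) ?_ ?_
  · rw [← card_neighborFinset_eq_degree, hclique.card_eq, Set.ncard_empty]
    norm_num
  · simpa using hclique.isClique

theorem of_neighborSet_eq_fourCycle {a b c d : V} (hdeg : G.degree v = 4)
    (hN : G.neighborSet v = {a, b, c, d}) (hac : a ≠ c)
    (hab : G.Adj a b) (hbc : G.Adj b c) (hcd : G.Adj c d) (hda : G.Adj d a) : IsReducible G := by
  by_cases hadj : G.Adj a c
  · refine of_isClique_neighborSet (v := v) (E := {s(b, d)}) (by simp [hdeg]) ?_
    simp +contextual [isClique_insert, *, hda.symm]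
  · refine of_lift (X := {v}) (E := {s(a, c)}) (Set.singleton_nonempty v)
      (by simp [ncard_incidenceSet, hdeg])
      (hasForestCut_of_neighborSet_eq_fourCycle hN hac hadj hab hbc hcd hda)

theorem of_adj_degree_eq_four {a b c : V} (hva : G.Adj v a) (hvb : G.Adj v b) (hvc : G.Adj v c)
    (hab : G.Adj a b) (hac : G.Adj a c) (hbc : G.Adj b c) (hdeg_v : G.degree v = 4)
    (hdeg_a : G.degree a = 4) (hcard : 6 < Fintype.card V) : IsReducible G := by
  classical
  obtain ⟨d, hNv⟩ : ∃ d, G.neighborSet v = {d, a, b, c} := by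
    simpa using exists_neighborSet_eq_insert (v := v) (T := {a, b, c})
      (by simp [Finset.insert_subset_iff, *]) (by simp [hdeg_v, hab.ne, hac.ne, hbc.ne])
  obtain ⟨e, hNa⟩ : ∃ e, G.neighborSet a = {e, v, b, c} := by
    simpa using exists_neighborSet_eq_insert (v := a) (T := {v, b, c})
      (by simp [Finset.insert_subset_iff, *, hva.symm])
      (by simp [hdeg_a, hvb.ne, hvc.ne, hbc.ne])
  by_cases hd : G.Adj d b ∧ G.Adj d c
  · refine of_isClique_neighborSet (v := v) (E := {s(d, a)}) (by simp [hdeg_v]) ?_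
    simp +contextual [isClique_insert, *]
  by_cases he : G.Adj e b ∧ G.Adj e c
  · refine of_isClique_neighborSet (v := a) (E := {s(e, v)}) (by simp [hdeg_a]) ?_
    simp +contextual [isClique_insert, *]
  have hboundary : outerBoundary G {v, a} ⊆ {d, e, b, c} := by
    rintro y ⟨hy, x, rfl | rfl, hxy⟩
    · have hyN : y ∈ ({d, a, b, c} : Set V) := hNv.le hxy
      grind
    · have hyN : y ∈ ({e, v, b, c} : Set V) := hNa.le hxy
      grind
  by_cases hde : G.Adj d e ∧ (G.Adj d b ∨ G.Adj d c) ∧ (G.Adj e b ∨ G.Adj e c)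
  · obtain ⟨E, hE, hclique⟩ := exists_isClique_sup_fromEdgeSet hbc hde.1 hde.2.1 hde.2.2
    refine of_isClique_outerBoundary (Set.insert_nonempty v {a}) ?_ (hclique.subset hboundary)
    have hedges := ncard_incidenceSet_union_add_one hva
    rw [Set.biUnion_pair, Set.ncard_pair hva.ne]
    lia
  · refine .inl (hasForestCut_of_outerBoundary_subset (Set.insert_nonempty v {a}) hboundary ?_
      (isAcyclic_induce_insert_insert_pair hd he hde))
    have hfour : ({d, e, b, c} : Set V).ncard ≤ 4 := by
      simpa [← Set.ncard_coe_finset] using Finset.card_le_four (a := d) (b := e) (c := b) (d := c)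
    rw [Set.ncard_pair hva.ne, Nat.card_eq_fintype_card]
    lia

theorem of_mem_isNClique_three {a : V} {T : Finset V} (hT : G.IsNClique 3 T)
    (hTv : T ⊆ G.neighborFinset v) (haT : a ∈ T) (hdeg_v : G.degree v = 4)
    (hdeg_a : G.degree a = 4) (hcard : 6 < Fintype.card V) : IsReducible G := by
  classical
  obtain ⟨b, c, -, hbcT⟩ := Finset.card_eq_two.1
    ((Finset.card_erase_of_mem haT).trans (congrArg (· - 1) hT.card_eq))
  obtain rfl : T = {a, b, c} := by rw [← hbcT, Finset.insert_erase haT]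
  obtain ⟨hab, hac, hbc⟩ := is3Clique_triple_iff.1 hT
  simp only [Finset.insert_subset_iff, Finset.singleton_subset_iff, mem_neighborFinset] at hTv
  exact of_adj_degree_eq_four hTv.1 hTv.2.1 hTv.2.2 hab hac hbc hdeg_v hdeg_a hcard

theorem or_exists_isNClique_three_of_degree_eq_four (hdeg : G.degree v = 4)
    (hcard : 6 < Fintype.card V) :
    IsReducible G ∨
      ∃ T, G.IsNClique 3 T ∧ T ⊆ G.neighborFinset v ∧ ∀ a ∈ T, G.degree a ≠ 4 := by
  classical
  by_cases hforest : (G.induce (G.neighborSet v)).IsAcyclic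
  · exact .inl (of_isAcyclic_neighborSet (by lia) hforest)
  rw [← coe_neighborFinset] at hforest
  rcases exists_isNClique_three_or_fourCycle_of_not_isAcyclic_induce
    ((G.card_neighborFinset_eq_degree v).trans hdeg).le hforest with
    ⟨T, hTv, hT⟩ | ⟨a, b, c, d, hac, -, hab, hbc, hcd, hda, hN⟩
  · by_cases hdeg_T : ∀ a ∈ T, G.degree a ≠ 4
    · exact .inr ⟨T, hT, hTv, hdeg_T⟩
    · push Not at hdeg_T
      obtain ⟨a, haT, hdeg_a⟩ := hdeg_T
      exact .inl (of_mem_isNClique_three hT hTv haT hdeg hdeg_a hcard)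
  · exact .inl (of_neighborSet_eq_fourCycle hdeg (by simp [← coe_neighborFinset, hN]) hac hab hbc
      hcd hda)

end IsReducible

end Reducibility

section DoubleCounting

variable [Fintype V] [DecidableRel G.Adj] {A B : Finset V} {r : ℕ}

theorem card_inter_add_card_inter_le_degree [DecidableEq V] (hAB : Disjoint A B) (u : V) :
    (A ∩ G.neighborFinset u).card + (B ∩ G.neighborFinset u).card ≤ G.degree u := by
  rw [← card_neighborFinset_eq_degree, ← Finset.card_union_of_disjoint
    (hAB.mono Finset.inter_subset_left Finset.inter_subset_left)]
  exact Finset.card_le_card (Finset.union_subset Finset.inter_subset_right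
    Finset.inter_subset_right)

theorem le_card_inter_neighborFinset_of_isNClique [DecidableEq V] {T : Finset V} {u : V}
    (hT : G.IsNClique (r + 1) T) (hTB : T ⊆ B) (hu : u ∈ T) :
    r ≤ (B ∩ G.neighborFinset u).card := by
  calc r = (T.erase u).card := by rw [Finset.card_erase_of_mem hu, hT.card_eq, Nat.add_sub_cancel]
    _ ≤ (B ∩ G.neighborFinset u).card := Finset.card_le_card fun x hx ↦ by
      obtain ⟨hxu, hxT⟩ := Finset.mem_erase.1 hx
      exact Finset.mem_inter.2 ⟨hTB hxT, (G.mem_neighborFinset u x).2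
        (hT.isClique hu hxT hxu.symm)⟩

theorem mul_card_add_mul_card_le_sum_degree (hAB : Disjoint A B)
    (hA : ∀ v ∈ A, ∃ T, G.IsNClique (r + 1) T ∧ T ⊆ G.neighborFinset v ∧ T ⊆ B)
    (hB : ∀ u ∈ B, r ≤ G.degree u) :
    A.card * (r + 1) + B.card * r ≤ ∑ u ∈ B, G.degree u := by
  classical
  -- A vertex of `C` pays the `r` out of its edges inside `B`, which leaves its edges to `A` for the
  -- cliques; the other vertices of `B` belong to no clique and can spend any of their edges.
  set C := {u ∈ B | r ≤ (B ∩ G.neighborFinset u).card} with hC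
  have hA_le : ∀ v ∈ A, r + 1 ≤ (C.bipartiteAbove G.Adj v).card := by
    intro v hv
    obtain ⟨T, hT, hTv, hTB⟩ := hA v hv
    rw [← hT.card_eq]
    refine Finset.card_le_card fun u hu ↦ ?_
    simp only [Finset.bipartiteAbove, hC, Finset.mem_filter]
    exact ⟨⟨hTB hu, le_card_inter_neighborFinset_of_isNClique hT hTB hu⟩,
      (G.mem_neighborFinset v u).1 (hTv hu)⟩
  have hbelow (u : V) : A.bipartiteBelow G.Adj u = A ∩ G.neighborFinset u := by
    ext v
    simp [Finset.bipartiteBelow, G.adj_comm]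
  calc A.card * (r + 1) + B.card * r
      ≤ ∑ v ∈ A, (C.bipartiteAbove G.Adj v).card + ∑ _ ∈ B, r := by
        rw [Finset.sum_const, smul_eq_mul]
        exact Nat.add_le_add_right (Finset.card_nsmul_le_sum _ _ _ hA_le) _
    _ = ∑ u ∈ C, (A ∩ G.neighborFinset u).card + ∑ _ ∈ B, r := by
        rw [Finset.sum_card_bipartiteAbove_eq_sum_card_bipartiteBelow]
        simp only [hbelow]
    _ = ∑ u ∈ B, ((if r ≤ (B ∩ G.neighborFinset u).card then (A ∩ G.neighborFinset u).card else 0)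
          + r) := by
        rw [hC, Finset.sum_filter, Finset.sum_add_distrib]
    _ ≤ ∑ u ∈ B, G.degree u := Finset.sum_le_sum fun u hu ↦ by
        have hdeg := card_inter_add_card_inter_le_degree hAB u (G := G)
        split_ifs with hr
        · lia
        · simpa using hB u hu

theorem eleven_mul_card_le_five_mul_ncard_edgeSet (hdeg : ∀ v, 4 ≤ G.degree v)
    (hfour : ∀ v, G.degree v = 4 →
      ∃ T, G.IsNClique 3 T ∧ T ⊆ G.neighborFinset v ∧ ∀ a ∈ T, G.degree a ≠ 4) :
    11 * Fintype.card V ≤ 5 * G.edgeSet.ncard := by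
  classical
  set A : Finset V := {v | G.degree v = 4}
  set B : Finset V := {v | ¬ G.degree v = 4}
  have hAB : Disjoint A B := Finset.disjoint_filter_filter_not _ _ _
  have hcard : A.card + B.card = Fintype.card V := Finset.card_filter_add_card_filter_not _
  have hsum : ∑ v ∈ A, G.degree v + ∑ v ∈ B, G.degree v = 2 * G.edgeSet.ncard := by
    rw [Finset.sum_filter_add_sum_filter_not, sum_degrees_eq_twice_card_edges,
      ← coe_edgeFinset, Set.ncard_coe_finset]
  have hsumA : ∑ v ∈ A, G.degree v = A.card * 4 :=
    Finset.sum_const_nat fun v hv ↦ (Finset.mem_filter.1 hv).2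
  have hsumB : B.card * 5 ≤ ∑ v ∈ B, G.degree v :=
    Finset.card_nsmul_le_sum B (G.degree ·) 5 fun v hv ↦
      (hdeg v).lt_of_ne' (Finset.mem_filter.1 hv).2
  have hcount : A.card * (2 + 1) + B.card * 2 ≤ ∑ v ∈ B, G.degree v := by
    refine mul_card_add_mul_card_le_sum_degree hAB (fun v hv ↦ ?_) fun v _ ↦ ?_
    · obtain ⟨T, hT, hTv, hTdeg⟩ := hfour v (Finset.mem_filter.1 hv).2
      exact ⟨T, hT, hTv, fun a ha ↦ Finset.mem_filter.2 ⟨Finset.mem_univ a, hTdeg a ha⟩⟩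
    · exact le_trans (by norm_num) (hdeg v)
  lia

end DoubleCounting

section Induction

theorem card_mul_le_two_mul_ncard_edgeSet [Fintype V] [DecidableRel G.Adj] {k : ℕ}
    (hdeg : ∀ v, k ≤ G.degree v) : Fintype.card V * k ≤ 2 * G.edgeSet.ncard := by
  classical
  rw [← coe_edgeFinset, Set.ncard_coe_finset, ← sum_degrees_eq_twice_card_edges]
  exact Finset.card_nsmul_le_sum _ _ _ fun v _ ↦ hdeg v

theorem isReducible_or_eleven_mul_card_le [Finite V] (G : SimpleGraph V) :
    IsReducible G ∨ 11 * Nat.card V ≤ 5 * G.edgeSet.ncard + 18 := by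
  classical
  have := Fintype.ofFinite V
  rw [Nat.card_eq_fintype_card]
  refine or_iff_not_imp_left.2 fun hred ↦ ?_
  have hdeg_min (v : V) : 4 ≤ G.degree v ∨ Fintype.card V ≤ G.degree v + 1 := by
    by_contra! h
    exact hred (.of_degree_le_three (by lia) h.2)
  obtain hle | hlt := le_or_gt (Fintype.card V) 4
  · have hedges := card_mul_le_two_mul_ncard_edgeSet (G := G) (k := Fintype.card V - 1) fun v ↦ by
      have hmin := hdeg_min v
      lia
    interval_cases Fintype.card V <;> lia
  have hdeg (v : V) : 4 ≤ G.degree v := (hdeg_min v).elim id (by lia)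
  have hedges := card_mul_le_two_mul_ncard_edgeSet hdeg
  obtain hle | hlt := le_or_gt (Fintype.card V) 6
  · lia
  · exact (eleven_mul_card_le_five_mul_ncard_edgeSet hdeg fun v hv ↦
      (IsReducible.or_exists_isNClique_three_of_degree_eq_four hv hlt).resolve_left hred).trans
      (Nat.le_add_right _ _)

theorem hasForestCut_of_ncard_edgeSet_lt [Finite V] (G : SimpleGraph V)
    (hG : 5 * G.edgeSet.ncard + 18 < 11 * Nat.card V) : HasForestCut G := by
  induction hn : Nat.card V using Nat.strong_induction_on generalizing V with
  | _ n ih =>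
    obtain (hcut | ⟨X, K, hX, hedges, hlift⟩) | hle := isReducible_or_eleven_mul_card_le G
    · exact hcut
    · have hcompl := Set.ncard_add_ncard_compl X
      have hXpos := hX.ncard_pos
      rw [← Nat.card_coe_set_eq Xᶜ] at hcompl
      exact hlift (ih _ (by lia) (K.induce Xᶜ) (by lia) rfl)
    · lia

end Induction

end ForestCuts

/-- If a graph `G` of order `n` has fewer than `(11/5) n - 18/5` edges,
then `G` has a forest cut. -/
theorem sparse_graph_has_forest_cut
    {V : Type*} [Fintype V] (G : SimpleGraph V) [Fintype G.edgeSet]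
    (h : (G.edgeFinset.card : ℝ) < 11 / 5 * Fintype.card V - 18 / 5) :
    ∃ S : Set V, IsForestCut G S := by
  refine hasForestCut_of_ncard_edgeSet_lt G ?_
  rw [← SimpleGraph.coe_edgeFinset, Set.ncard_coe_finset, Nat.card_eq_fintype_card]
  have hreal : 5 * (G.edgeFinset.card : ℝ) + 18 < 11 * Fintype.card V := by linarith
  exact_mod_cast hreal
end

section
/- If G is a graph of order n with fewer than 3n-6 edges that contains a universal vertex, then G has a forest cut. -/
/-!
Deleting a universal vertex `u` leaves a graph on `n - 1` vertices with at most `2 (n - 1) - 4`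
edges. By the theorem of Chen and Yu such a graph has an independent vertex cut `S`, and then
`S ∪ {u}` is a vertex cut of `G` inducing a subgraph of a star.

For the induction proving the Chen–Yu theorem one asks, for a prescribed vertex `u`, that moreover
`u ∉ S` or `S = {u}`. If `u` lies in no triangle, then the neighborhood of `u` or `{u}` will do.
If `u v w` is a triangle, contract the edge `u v`, which loses at least two edges. A cut of the
contracted graph pulls back to a cut of `G`, and the pullback is independent unless the cut is
`{u}`, in which case `{u, v}` cuts `G`. Counting edges, one of the two sides of this cut is again
sparse, and an independent cut of that side is a cut of `G`, because it misses one of the two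
adjacent vertices `u` and `v`, through which every detour into the other side can be short-cut.
-/

/-- A stable cut is a vertex cut which is an independent set. -/
structure IsStableCut {V : Type*} (G : SimpleGraph V) (S : Set V) : Prop where
  isVertexCut : IsVertexCut G S
  isIndepSet : G.IsIndepSet S

/-- The pair `{A, B}` is a separation of `G`: the two sides cover all vertices and no edge joins
`A \ B` to `B \ A`. As in Diestel's book, sides equal to the whole vertex set are allowed. -/
structure IsSeparation_s3 {V : Type*} (G : SimpleGraph V) (A B : Set V) : Prop where
  union_eq : A ∪ B = Set.univ
  not_adj : ∀ ⦃x y⦄, x ∉ B → y ∉ A → ¬ G.Adj x y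

open Classical in
/-- The retraction of `V` onto `Y` sending all vertices outside `Y` to the vertex `k` of `Y`. It
serves both to contract an edge and to push one side of a separation into the other. -/
noncomputable def retractOnto {V : Type*} (Y : Set V) (k : Y) (x : V) : Y :=
  if hx : x ∈ Y then ⟨x, hx⟩ else k

section

variable {V W : Type*} {G : SimpleGraph V} {H : SimpleGraph W}

section Retraction

variable {Y : Set V} {k : Y} {x : V}

lemma retractOnto_of_mem (hx : x ∈ Y) : retractOnto Y k x = ⟨x, hx⟩ := dif_pos hx

lemma retractOnto_of_notMem (hx : x ∉ Y) : retractOnto Y k x = k := dif_neg hx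

lemma retractOnto_surjective (Y : Set V) (k : Y) : Function.Surjective (retractOnto Y k) :=
  fun y ↦ ⟨y, retractOnto_of_mem y.2⟩

lemma retractOnto_preimage_of_notMem {T : Set Y} (hk : k ∉ T) :
    retractOnto Y k ⁻¹' T = Subtype.val '' T := by
  ext x
  by_cases hx : x ∈ Y <;> simp [retractOnto_of_mem, retractOnto_of_notMem, hx, hk]

lemma retractOnto_preimage_singleton (Y : Set V) (k : Y) :
    retractOnto Y k ⁻¹' {k} = insert ↑k Yᶜ := by
  ext x
  by_cases hx : x ∈ Y <;> simp [retractOnto_of_mem, retractOnto_of_notMem, hx, Subtype.ext_iff]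

end Retraction

section VertexCut

lemma reachable_map_of_forall_adj_reachable {f : V → W}
    (hf : ∀ ⦃x y⦄, G.Adj x y → H.Reachable (f x) (f y)) {x y : V} (hxy : G.Reachable x y) :
    H.Reachable (f x) (f y) := by
  rw [SimpleGraph.reachable_iff_reflTransGen] at hxy
  induction hxy with
  | refl => rfl
  | tail _ hadj ih => exact ih.trans (hf hadj)

lemma IsVertexCut.of_surjective {S : Set V} {T : Set W} (hT : IsVertexCut H T)
    {f : ↥Sᶜ → ↥Tᶜ} (hf : Function.Surjective f)
    (hadj : ∀ ⦃x y⦄, (G.induce Sᶜ).Adj x y → (H.induce Tᶜ).Reachable (f x) (f y)) :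
    IsVertexCut G S := by
  obtain ⟨a, b, hab⟩ := hT
  obtain ⟨x, rfl⟩ := hf a
  obtain ⟨y, rfl⟩ := hf b
  exact ⟨x, y, fun hxy ↦ hab (reachable_map_of_forall_adj_reachable hadj hxy)⟩

lemma IsVertexCut.preimage {T : Set W} (hT : IsVertexCut H T) {f : V → W}
    (hf : Function.Surjective f)
    (hadj : ∀ ⦃x y⦄, f x ∉ T → f y ∉ T → G.Adj x y → f x ≠ f y → H.Adj (f x) (f y)) :
    IsVertexCut G (f ⁻¹' T) := by
  refine hT.of_surjective (f := Tᶜ.restrictPreimage f) (Tᶜ.restrictPreimage_surjective hf)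
    fun x y hxy ↦ ?_
  by_cases heq : f x = f y
  · rw [show Tᶜ.restrictPreimage f x = Tᶜ.restrictPreimage f y from Subtype.ext heq]
  · exact SimpleGraph.Adj.reachable (hadj x.2 y.2 hxy heq)

lemma IsVertexCut.preimage_of_map {f : V → W} {T : Set W} (hT : IsVertexCut (G.map f) T)
    (hf : Function.Surjective f) : IsVertexCut G (f ⁻¹' T) :=
  hT.preimage hf fun _ _ _ _ hxy hne ↦ SimpleGraph.map_adj_apply' hxy hne

lemma IsVertexCut.compl_union_image {Y : Set V} {T : Set Y} (hT : IsVertexCut (G.induce Y) T) :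
    IsVertexCut G (Yᶜ ∪ Subtype.val '' T) := by
  have hY : ∀ x : ↥(Yᶜ ∪ Subtype.val '' T)ᶜ, x.1 ∈ Y := fun x ↦ by
    by_contra hx
    exact x.2 (Or.inl hx)
  have hTc : ∀ x, (⟨x.1, hY x⟩ : Y) ∈ Tᶜ := fun x hx ↦ x.2 (Or.inr ⟨_, hx, rfl⟩)
  refine hT.of_surjective (f := fun x ↦ ⟨⟨x.1, hY x⟩, hTc x⟩) (fun y ↦ ⟨⟨y.1, ?_⟩, rfl⟩)
    fun x y hxy ↦ SimpleGraph.Adj.reachable hxy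
  rintro (hy | ⟨z, hz, hzy⟩)
  · exact hy y.1.2
  · exact y.2 (Subtype.ext hzy ▸ hz)

lemma isVertexCut_of_neighborSet_subset {S : Set V} {a b : V} (ha : a ∉ S) (hb : b ∉ S)
    (hab : a ≠ b) (hS : G.neighborSet a ⊆ S) : IsVertexCut G S := by
  refine ⟨⟨a, ha⟩, ⟨b, hb⟩, ?_⟩
  rintro ⟨_ | @⟨_, x, _, hadj, -⟩⟩
  · exact hab rfl
  · exact x.2 (hS hadj)

lemma IsVertexCut.exists_isSeparation {S : Set V} (hS : IsVertexCut G S) :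
    ∃ A B, IsSeparation_s3 G A B ∧ A ∩ B = S ∧ A ≠ Set.univ ∧ B ≠ Set.univ := by
  obtain ⟨a, b, hab⟩ := hS
  set C : Set V := Subtype.val '' {x | (G.induce Sᶜ).Reachable a x}
  have haC : ↑a ∈ C := ⟨a, .rfl, rfl⟩
  have hbC : ↑b ∉ C := by
    rintro ⟨x, hx, hxb⟩
    exact hab (Subtype.ext hxb ▸ hx)
  have hCS : Disjoint C S := by
    rw [Set.disjoint_left]
    rintro _ ⟨x, -, rfl⟩
    exact x.2
  refine ⟨C ∪ S, Cᶜ, ⟨?_, ?_⟩, ?_, ?_, ?_⟩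
  · rw [Set.union_right_comm, Set.union_compl_self, Set.univ_union]
  · intro x y hx hy hxy
    obtain ⟨x, hax, rfl⟩ := not_not.mp hx
    refine hy (Or.inl ⟨⟨y, fun hyS ↦ hy (Or.inr hyS)⟩, hax.trans ?_, rfl⟩)
    exact SimpleGraph.Adj.reachable hxy
  · rw [Set.union_inter_distrib_right, Set.inter_compl_self, Set.empty_union,
      Set.inter_eq_left, Set.subset_compl_iff_disjoint_left]
    exact hCS
  · exact fun h ↦ (h ▸ Set.mem_univ b.1 : b.1 ∈ C ∪ S).elim hbC b.2
  · exact fun h ↦ (h ▸ Set.mem_univ a.1 : a.1 ∈ Cᶜ) haC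

end VertexCut

section StableCut

variable {A B : Set V}

lemma IsSeparation_s3.symm (h : IsSeparation_s3 G A B) : IsSeparation_s3 G B A where
  union_eq := by rw [Set.union_comm, h.union_eq]
  not_adj _ _ hx hy hxy := h.not_adj hy hx hxy.symm

lemma isIndepSet_image_val {Y : Set V} {T : Set Y} (hT : (G.induce Y).IsIndepSet T) :
    G.IsIndepSet (Subtype.val '' T) := by
  rintro _ ⟨x, hx, rfl⟩ _ ⟨y, hy, rfl⟩ hne
  exact hT hx hy (ne_of_apply_ne Subtype.val hne)

lemma IsSeparation_s3.isStableCut_image_val (h : IsSeparation_s3 G A B) (hK : G.IsClique (A ∩ B))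
    (hnt : (A ∩ B).Nontrivial) {T : Set A} (hT : IsStableCut (G.induce A) T) :
    IsStableCut G (Subtype.val '' T) := by
  obtain ⟨k, hkAB, hkT⟩ : ∃ k : A, ↑k ∈ A ∩ B ∧ k ∉ T := by
    obtain ⟨x, hx, y, hy, hxy⟩ := hnt
    by_contra! hall
    exact hT.isIndepSet (hall ⟨x, hx.1⟩ hx) (hall ⟨y, hy.1⟩ hy) (by simpa using hxy)
      (hK hx hy hxy)
  have hboundary : ∀ ⦃x y⦄, x ∈ A → y ∉ A → G.Adj x y → x ∈ A ∩ B := fun x y hx hy hxy ↦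
    ⟨hx, by_contra fun hxB ↦ h.not_adj hxB hy hxy⟩
  refine ⟨?_, isIndepSet_image_val hT.isIndepSet⟩
  -- Pushing everything outside `A` onto `k` keeps adjacent vertices adjacent or identifies them.
  rw [← retractOnto_preimage_of_notMem hkT]
  refine hT.isVertexCut.preimage (retractOnto_surjective A k) fun x y _ _ hxy hne ↦ ?_
  by_cases hx : x ∈ A <;> by_cases hy : y ∈ A <;>
    simp only [retractOnto_of_mem, retractOnto_of_notMem, hx, hy, SimpleGraph.comap_adj, ne_eq,
      Function.Embedding.subtype_apply, not_false_eq_true, not_true_eq_false,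
      Subtype.ext_iff] at hne ⊢
  · exact hxy
  · exact hK (hboundary hx hy hxy) hkAB hne
  · exact hK hkAB (hboundary hy hx hxy.symm) hne

lemma isIndepSet_image_val_of_map_retractOnto {Y : Set V} {k : Y} {T : Set Y}
    (hT : (G.map (retractOnto Y k)).IsIndepSet T) : G.IsIndepSet (Subtype.val '' T) := by
  rintro _ ⟨x, hx, rfl⟩ _ ⟨y, hy, rfl⟩ hne hxy
  have hne' : x ≠ y := ne_of_apply_ne Subtype.val hne
  exact hT hx hy hne' ⟨hne', x, y, hxy, retractOnto_of_mem x.2, retractOnto_of_mem y.2⟩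

lemma exists_isStableCut_of_isIndepSet_neighborSet {u : V}
    (hu : G.IsIndepSet (G.neighborSet u)) (hG : G ≠ ⊤) :
    ∃ S, IsStableCut G S ∧ (u ∈ S → S = {u}) := by
  by_cases huniv : G.IsUniversal u
  · obtain ⟨a, b, hab, hadj⟩ := SimpleGraph.ne_top_iff_exists_not_adj.mp hG
    have hau : a ≠ u := fun h ↦ hadj (h ▸ huniv (h ▸ hab))
    have hbu : b ≠ u := fun h ↦ hadj (h ▸ (huniv (h ▸ hab.symm)).symm)
    refine ⟨{u}, ⟨isVertexCut_of_neighborSet_subset hau hbu hab fun x hax ↦ ?_,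
      Set.pairwise_singleton _ _⟩, fun _ ↦ rfl⟩
    by_contra hxu
    exact hu (huniv hau.symm) (huniv (Ne.symm hxu)) hax.ne hax
  · simp only [SimpleGraph.IsUniversal, not_forall] at huniv
    obtain ⟨b, hub, hadj⟩ := huniv
    have huN : u ∉ G.neighborSet u := G.irrefl
    exact ⟨G.neighborSet u,
      ⟨isVertexCut_of_neighborSet_subset huN hadj hub subset_rfl, hu⟩, fun h ↦ absurd h huN⟩

end StableCut

section EdgeCount

lemma ncard_edgeSet_induce (G : SimpleGraph V) (Y : Set V) :
    (G.induce Y).edgeSet.ncard = (G.edgeSet ∩ Y.sym2).ncard := by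
  rw [← Set.ncard_image_of_injective _ (Sym2.map.injective Subtype.val_injective)]
  congr 1
  ext ⟨x, y⟩
  constructor
  · rintro ⟨⟨x', y'⟩, hadj, heq⟩
    rw [← heq]
    exact ⟨hadj, x'.2, y'.2⟩
  · rintro ⟨hadj, hx, hy⟩
    exact ⟨s(⟨x, hx⟩, ⟨y, hy⟩), hadj, rfl⟩

variable [Finite V]

lemma card_compl_singleton_add_one (v : V) : Nat.card ({v}ᶜ : Set V) + 1 = Nat.card V := by
  rw [Nat.card_coe_set_eq, ← Set.ncard_singleton v, add_comm, Set.ncard_add_ncard_compl]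

lemma ncard_edgeSet_le_choose_two (G : SimpleGraph V) :
    G.edgeSet.ncard ≤ (Nat.card V).choose 2 := by
  classical
  have := Fintype.ofFinite V
  rw [← SimpleGraph.coe_edgeFinset, Set.ncard_coe_finset, Nat.card_eq_fintype_card]
  exact G.card_edgeFinset_le_card_choose_two

lemma ncard_edgeSet_induce_add_le (G : SimpleGraph V) (A B : Set V) :
    (G.induce A).edgeSet.ncard + (G.induce B).edgeSet.ncard ≤
      G.edgeSet.ncard + (G.induce (A ∩ B)).edgeSet.ncard := by
  simp only [ncard_edgeSet_induce]
  rw [← Set.ncard_union_add_ncard_inter, ← Set.inter_inter_distrib_left, ← Set.sym2_inter]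
  gcongr
  · exact Set.toFinite _
  · exact Set.union_subset Set.inter_subset_left Set.inter_subset_left

lemma ncard_edgeSet_map_add_two_le {u v w : V} (huv : G.Adj u v) (huw : G.Adj u w)
    (hvw : G.Adj v w) {f : V → W} (hf : f u = f v) :
    (G.map f).edgeSet.ncard + 2 ≤ G.edgeSet.ncard := by
  -- The edge `u v` becomes a loop, and `v w` has the same image as `u w`.
  have hsub : (G.map f).edgeSet ⊆ Sym2.map f '' (G.edgeSet \ {s(u, v), s(v, w)}) := by
    rintro ⟨-, -⟩ ⟨hne, x, y, hxy, rfl, rfl⟩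
    by_cases hvw' : s(x, y) = s(v, w)
    · refine ⟨s(u, w), ⟨huw, by simp [huw.ne, huv.ne, hvw.ne']⟩, ?_⟩
      rw [Sym2.map_mk, hf, ← Sym2.map_mk, ← hvw', Sym2.map_mk]
    · have huv' : s(x, y) ≠ s(u, v) := fun h ↦ by
        rcases Sym2.eq_iff.mp h with ⟨rfl, rfl⟩ | ⟨rfl, rfl⟩
        exacts [hne hf, hne hf.symm]
      exact ⟨s(x, y), ⟨hxy, by simp [-Sym2.eq, hvw', huv']⟩, rfl⟩
  have hpair : ({s(u, v), s(v, w)} : Set (Sym2 V)).ncard = 2 :=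
    Set.ncard_pair (by simp [huv.ne, huw.ne])
  calc (G.map f).edgeSet.ncard + 2
      ≤ (G.edgeSet \ {s(u, v), s(v, w)}).ncard + 2 := by
        gcongr
        exact (Set.ncard_le_ncard hsub (Set.toFinite _)).trans (Set.ncard_image_le (Set.toFinite _))
    _ = G.edgeSet.ncard := by
        rw [← hpair]
        exact Set.ncard_sdiff_add_ncard_of_subset (by simp [Set.insert_subset_iff, huv, hvw])

lemma ncard_edgeSet_induce_compl_singleton_add {u : V} (hu : G.IsUniversal u) :
    (G.induce {u}ᶜ).edgeSet.ncard + (Nat.card V - 1) = G.edgeSet.ncard := by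
  classical
  have := Fintype.ofFinite V
  simp only [← SimpleGraph.coe_edgeFinset, Set.ncard_coe_finset, Nat.card_eq_fintype_card]
  rw [G.card_edgeFinset_induce_compl_singleton, G.card_edgeFinset_deleteIncidenceSet,
    ← (G.degree_eq_card_sub_one u).mpr hu, Nat.sub_add_cancel (G.degree_le_card_edgeFinset u)]

end EdgeCount

section ChenYu

lemma ne_top_of_ncard_edgeSet_add_four_le [Finite V]
    (hG : G.edgeSet.ncard + 4 ≤ 2 * Nat.card V) : G ≠ ⊤ := by
  classical
  have := Fintype.ofFinite V
  rintro rfl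
  rw [← SimpleGraph.coe_edgeFinset, Set.ncard_coe_finset,
    SimpleGraph.card_edgeFinset_top_eq_card_choose_two, Nat.card_eq_fintype_card] at hG
  qify at hG
  rw [Nat.cast_choose_two] at hG
  nlinarith [sq_nonneg (2 * Fintype.card V - 5 : ℚ)]

lemma IsVertexCut.exists_isSeparation_sparse [Finite V] {u v : V} (huv : u ≠ v)
    (hcut : IsVertexCut G {u, v}) (hG : G.edgeSet.ncard + 4 ≤ 2 * Nat.card V) :
    ∃ A B, IsSeparation_s3 G A B ∧ A ∩ B = {u, v} ∧ A ≠ Set.univ ∧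
      (G.induce A).edgeSet.ncard + 4 ≤ 2 * A.ncard := by
  obtain ⟨A, B, hsep, hAB, hA, hB⟩ := hcut.exists_isSeparation
  have hedges := ncard_edgeSet_induce_add_le G A B
  have hclique : (G.induce (A ∩ B)).edgeSet.ncard ≤ 1 := by
    simpa [hAB, Set.ncard_pair huv] using ncard_edgeSet_le_choose_two (G.induce (A ∩ B))
  have hverts : Nat.card V + 2 = A.ncard + B.ncard := by
    rw [← Set.ncard_union_add_ncard_inter, hsep.union_eq, hAB, Set.ncard_pair huv, Set.ncard_univ]
  by_cases hsparse : (G.induce A).edgeSet.ncard + 4 ≤ 2 * A.ncard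
  · exact ⟨A, B, hsep, hAB, hA, hsparse⟩
  · exact ⟨B, A, hsep.symm, by rw [Set.inter_comm, hAB], hB, by lia⟩

lemma ncard_edgeSet_contract_add_four_le [Finite V] {u v w : V} (huv : G.Adj u v)
    (huw : G.Adj u w) (hvw : G.Adj v w) (hG : G.edgeSet.ncard + 4 ≤ 2 * Nat.card V) :
    (G.map (retractOnto {v}ᶜ ⟨u, huv.ne⟩)).edgeSet.ncard + 4 ≤
      2 * Nat.card ({v}ᶜ : Set V) := by
  have hedges := ncard_edgeSet_map_add_two_le huv huw hvw (f := retractOnto {v}ᶜ ⟨u, huv.ne⟩)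
    (by rw [retractOnto_of_mem huv.ne, retractOnto_of_notMem (by simp)])
  have hverts := card_compl_singleton_add_one v
  lia

lemma exists_isStableCut_of_isVertexCut_pair [Finite V] {u v : V} (huv : G.Adj u v)
    (hcut : IsVertexCut G {u, v}) (hG : G.edgeSet.ncard + 4 ≤ 2 * Nat.card V)
    (ih : ∀ Y : Set V, Y ≠ Set.univ → ∀ y : Y, (G.induce Y).edgeSet.ncard + 4 ≤ 2 * Y.ncard →
      ∃ T, IsStableCut (G.induce Y) T ∧ (y ∈ T → T = {y})) :
    ∃ S, IsStableCut G S ∧ (u ∈ S → S = {u}) := by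
  obtain ⟨A, B, hsep, hAB, hA, hsparse⟩ := hcut.exists_isSeparation_sparse huv.ne hG
  have huA : u ∈ A := Set.inter_subset_left (hAB ▸ Set.mem_insert u {v})
  obtain ⟨T, hT, huT⟩ := ih A hA ⟨u, huA⟩ hsparse
  have hclique : G.IsClique (A ∩ B) := by
    simpa [hAB, SimpleGraph.isClique_pair] using fun _ ↦ huv
  refine ⟨Subtype.val '' T,
    hsep.isStableCut_image_val hclique (hAB ▸ Set.nontrivial_pair huv.ne) hT, ?_⟩
  rintro ⟨x, hx, rfl⟩
  rw [huT hx, Set.image_singleton]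

theorem exists_isStableCut_of_ncard_edgeSet_add_four_le [Finite V] (u : V)
    (hG : G.edgeSet.ncard + 4 ≤ 2 * Nat.card V) :
    ∃ S, IsStableCut G S ∧ (u ∈ S → S = {u}) := by
  induction hn : Nat.card V using Nat.strong_induction_on generalizing V with
  | _ n ih =>
  subst hn
  by_cases hu : G.IsIndepSet (G.neighborSet u)
  · exact exists_isStableCut_of_isIndepSet_neighborSet hu (ne_top_of_ncard_edgeSet_add_four_le hG)
  obtain ⟨v, huv, w, huw, -, hvw⟩ :
      ∃ v, G.Adj u v ∧ ∃ w, G.Adj u w ∧ v ≠ w ∧ G.Adj v w := by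
    simpa [Set.Pairwise] using hu
  have card_lt : ∀ Y : Set V, Y ≠ Set.univ → Nat.card Y < Nat.card V := fun Y hY ↦
    (Set.ncard_lt_ncard (Set.ssubset_univ_iff.mpr hY)).trans_eq (Set.ncard_univ V)
  let k : ({v}ᶜ : Set V) := ⟨u, huv.ne⟩
  obtain ⟨T, hT, hkT⟩ := ih _ (card_lt {v}ᶜ (by simp)) k
    (ncard_edgeSet_contract_add_four_le huv huw hvw hG) rfl
  have hcut := hT.isVertexCut.preimage_of_map (retractOnto_surjective _ k)
  by_cases hk : k ∈ T
  · rw [hkT hk, retractOnto_preimage_singleton, compl_compl] at hcut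
    exact exists_isStableCut_of_isVertexCut_pair huv hcut hG
      fun Y hY y hsparse ↦ ih _ (card_lt Y hY) y hsparse rfl
  · rw [retractOnto_preimage_of_notMem hk] at hcut
    refine ⟨_, ⟨hcut, isIndepSet_image_val_of_map_retractOnto hT.isIndepSet⟩, ?_⟩
    rintro ⟨x, hx, hxu⟩
    exact absurd ((Subtype.ext hxu : x = k) ▸ hx) hk

end ChenYu

lemma isAcyclic_induce_insert_s3 {S : Set V} (hS : G.IsIndepSet S) (u : V) :
    (G.induce (insert u S)).IsAcyclic := by
  refine (SimpleGraph.isAcyclic_starGraph ⟨u, Set.mem_insert u S⟩).anti ?_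
  rintro ⟨x, hx⟩ ⟨y, hy⟩ hxy
  rw [SimpleGraph.starGraph_adj]
  refine ⟨hxy.ne, ?_⟩
  simp only [Subtype.mk.injEq]
  by_contra! h
  exact hS (hx.resolve_left h.1) (hy.resolve_left h.2) (SimpleGraph.Adj.ne hxy) hxy

end

/-- If `G` is a graph of order `n` with fewer than `3n - 6` edges that contains a
universal vertex, then `G` has a forest cut. -/
theorem sparse_graph_with_universal_vertex_has_forest_cut
    {V : Type*} [Fintype V] (G : SimpleGraph V) [Fintype G.edgeSet]
    (h : (G.edgeFinset.card : ℤ) < 3 * Fintype.card V - 6)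
    (huniv : ∃ u : V, ∀ v : V, v ≠ u → G.Adj u v) :
    ∃ S : Set V, IsForestCut G S := by
  obtain ⟨u, hu⟩ := huniv
  have hedges := ncard_edgeSet_induce_compl_singleton_add fun v hv ↦ hu v hv.symm
  have hverts := card_compl_singleton_add_one u
  rw [← G.coe_edgeFinset, Set.ncard_coe_finset] at hedges
  rw [← Nat.card_eq_fintype_card] at h
  have hsparse : (G.induce {u}ᶜ).edgeSet.ncard + 4 ≤ 2 * Nat.card ({u}ᶜ : Set V) := by lia
  obtain ⟨w⟩ : Nonempty ({u}ᶜ : Set V) := (Nat.card_pos_iff.mp (by lia)).1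
  obtain ⟨S, hS, -⟩ := exists_isStableCut_of_ncard_edgeSet_add_four_le w hsparse
  have hcut := hS.isVertexCut.compl_union_image
  rw [compl_compl, ← Set.insert_eq] at hcut
  exact ⟨_, hcut, isAcyclic_induce_insert_s3 (isIndepSet_image_val hS.isIndepSet) u⟩
end

section
/- If G is a 4-connected graph of order n greater than 8 that has no forest cut, u is a vertex of G of degree 4, and the neighborhood N_G(u) of u contains no triangle (no three pairwise adjacent vertices), then the sum of the degrees in G of the four neighbors of u is at least 19. -/
/-- A graph is `k`-connected if it has more than `k` vertices and deleting any set of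
fewer than `k` vertices leaves a connected graph. -/
def KConnected {V : Type*} [Fintype V] (k : ℕ) (G : SimpleGraph V) : Prop :=
  k < Fintype.card V ∧ ∀ S : Finset V, S.card < k → (G.induce (↑S : Set V)ᶜ).Connected

/-!
Let `N` be the neighborhood of `u` and call the neighbors of `v ∈ N` outside `N ∪ {u}` *outer*.
For every `B ⊆ N`, exchanging `B` for its outer neighbors turns `N` into a set that separates
`{u} ∪ B` from the rest of the graph; if `B` has at most two outer neighbors, some vertex is left
over on the other side, so this cut has to contain a cycle.

With `B = ∅`, every vertex of `N` has two neighbors in `N`, so it suffices that the numbers of outer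
neighbors of the four vertices of `N` sum to at least `7`. Each of these numbers is positive
(`|B| = 1`), so the sum is at least `7` unless two vertices of `N` have a single outer neighbor
each. Such an outer neighbor is adjacent to at least three vertices of `N` (`|B| = 1` again), and
there are at least three outer vertices in total (`B = N`): if the two outer neighbors are distinct,
double counting yields `3 + 3 + 1`. If they coincide in `x` and the sum is at most `6`, then
`|B| = 3` shows that each of the remaining two vertices of `N` has at least two outer neighbors
other than `x`, hence exactly two, so `x` has only two neighbors in `N`, a contradiction.
-/

open Finset SimpleGraph

section Acyclic

variable {V : Type*} {G : SimpleGraph V}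

theorem isAcyclic_of_isAcyclic_induce_compl_singleton {v : V} (hv : (G.neighborSet v).Subsingleton)
    (h : (G.induce {v}ᶜ).IsAcyclic) : G.IsAcyclic := by
  intro w c hc
  by_cases hvc : v ∈ c.support
  · have hnt : (c.toSubgraph.neighborSet v).Nontrivial := by
      have hncard := hc.ncard_neighborSet_toSubgraph_eq_two hvc
      exact (Set.one_lt_ncard_iff_nontrivial_and_finite.1 (by lia)).1
    exact Set.not_subsingleton_iff.2 (hnt.mono (c.toSubgraph.neighborSet_subset v)) hv
  · have hmem : ∀ x ∈ c.support, x ∈ ({v}ᶜ : Set V) := fun x hx hxv => hvc (hxv ▸ hx)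
    exact h (c.induce _ hmem) (.of_map (f := (Embedding.induce _).toHom) (by rwa [Walk.map_induce]))

theorem nontrivial_neighborSet_inter_of_isAcyclic_induce {v : V} {s : Set V}
    (hs : (G.induce s).IsAcyclic) (hvs : ¬ (G.induce (insert v s)).IsAcyclic) :
    (G.neighborSet v ∩ s).Nontrivial := by
  by_contra hv
  rw [Set.not_nontrivial_iff] at hv
  refine hvs (isAcyclic_of_isAcyclic_induce_compl_singleton (v := ⟨v, s.mem_insert v⟩) ?_ ?_)
  · intro x hx y hy
    exact Subtype.ext (hv ⟨hx, x.2.resolve_left (Adj.ne' hx)⟩ ⟨hy, y.2.resolve_left hy.ne'⟩)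
  · have hmem : ∀ x : ({⟨v, s.mem_insert v⟩}ᶜ : Set (insert v s : Set V)), (x : V) ∈ s :=
      fun x => x.1.2.resolve_left fun h => x.2 (Subtype.ext h)
    exact hs.comap ⟨fun x => ⟨x, hmem x⟩, id⟩
      fun x y hxy => Subtype.ext (Subtype.ext (Subtype.mk.inj hxy))

theorem two_le_card_inter_of_isAcyclic_induce [DecidableEq V] {v : V} [Fintype (G.neighborSet v)]
    {s : Finset V} (hs : (G.induce (s : Set V)).IsAcyclic)
    (hvs : ¬ (G.induce (insert v s : Finset V)).IsAcyclic) : 2 ≤ #(s ∩ G.neighborFinset v) := by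
  rw [coe_insert] at hvs
  have hnt := nontrivial_neighborSet_inter_of_isAcyclic_induce hs hvs
  rwa [Set.inter_comm, ← coe_neighborFinset, ← coe_inter, ← Finset.Nontrivial,
    ← one_lt_card_iff_nontrivial] at hnt

theorem isAcyclic_of_cliqueFree_three (hG : G.CliqueFree 3) (hV : ENat.card V ≤ 3) :
    G.IsAcyclic := by
  intro v c hc
  have hlen : c.length ≤ 3 := by
    have := Nat.cast_le.mp (hc.support_nodup.length_le_enatCard.trans hV)
    rwa [List.length_tail, c.length_support] at this
  obtain ⟨t, ht⟩ :=
    is3Clique_iff_exists_cycle_length_three.2 ⟨v, c, hc, hlen.antisymm hc.three_le_length⟩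
  exact hG t ht

theorem isAcyclic_induce_of_card_le_three {s : Finset V} (hG : G.CliqueFreeOn s 3) (hs : #s ≤ 3) :
    (G.induce (s : Set V)).IsAcyclic :=
  isAcyclic_of_cliqueFree_three (cliqueFree_induce_iff .. |>.2 hG) (by simpa using hs)

theorem cliqueFreeOn_three_iff {s : Set V} :
    G.CliqueFreeOn s 3 ↔
      ¬ ∃ a ∈ s, ∃ b ∈ s, ∃ c ∈ s, G.Adj a b ∧ G.Adj b c ∧ G.Adj a c := by
  classical
  constructor
  · rintro h ⟨a, ha, b, hb, c, hc, hab, hbc, hac⟩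
    exact h (t := {a, b, c}) (by simp [Set.insert_subset_iff, *])
      (is3Clique_triple_iff.2 ⟨hab, hac, hbc⟩)
  · rintro h t hts ht
    obtain ⟨a, b, c, hab, hac, hbc, rfl⟩ := is3Clique_iff.1 ht
    exact h ⟨a, hts (by simp), b, hts (by simp), c, hts (by simp), hab, hbc, hac⟩

end Acyclic

theorem isVertexCut_of_neighborSet_subset_s8 {V : Type*} {G : SimpleGraph V} {A S : Set V}
    (hA : A.Nonempty) (hAS : Disjoint A S) (hne : ∃ b, b ∉ A ∪ S)
    (hadj : ∀ v ∈ A, G.neighborSet v ⊆ A ∪ S) : IsVertexCut G S := by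
  obtain ⟨a, ha⟩ := hA
  obtain ⟨b, hb⟩ := hne
  rw [Set.mem_union, not_or] at hb
  refine ⟨⟨a, hAS.notMem_of_mem_left ha⟩, ⟨b, hb.2⟩, fun ⟨p⟩ => ?_⟩
  obtain ⟨d, -, hfst, hsnd⟩ := p.exists_boundary_dart (Subtype.val ⁻¹' A) ha hb.1
  exact (hadj _ hfst d.adj).elim hsnd d.snd.2

theorem exists_eq_insert_of_mem_of_card_eq_four {α : Type*} [DecidableEq α] {s : Finset α}
    (hs : #s = 4) {v w : α} (hv : v ∈ s) (hw : w ∈ s) (hvw : v ≠ w) :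
    ∃ a b, a ≠ b ∧ a ≠ v ∧ a ≠ w ∧ b ≠ v ∧ b ≠ w ∧ s = {v, w, a, b} := by
  have hcard : #((s.erase v).erase w) = 2 := by
    rw [card_erase_of_mem (mem_erase.2 ⟨hvw.symm, hw⟩), card_erase_of_mem hv, hs]
  obtain ⟨a, b, hab, heq⟩ := card_eq_two.1 hcard
  have hmem : ∀ x, x ≠ w ∧ x ≠ v ∧ x ∈ s ↔ x = a ∨ x = b := by
    simpa [Finset.ext_iff] using heq
  grind

section OuterNeighbors

variable {V : Type*} [DecidableEq V] (G : SimpleGraph V) [G.LocallyFinite]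

/-- The neighbors of `v` outside the closed neighborhood of `u`. -/
def outerNeighbors (u v : V) : Finset V :=
  G.neighborFinset v \ insert u (G.neighborFinset u)

/-- For a set `B` of neighbors of `u`, the set of vertices outside `{u} ∪ B` with a neighbor in
`{u} ∪ B`: in the neighborhood of `u`, the set `B` is exchanged for its outer neighbors. -/
def exchangeCut (u : V) (B : Finset V) : Finset V :=
  G.neighborFinset u \ B ∪ B.biUnion (outerNeighbors G u)

variable {G} {u v w a b x y : V} {B : Finset V}

theorem mem_outerNeighbors :
    w ∈ outerNeighbors G u v ↔ G.Adj v w ∧ w ≠ u ∧ ¬ G.Adj u w := by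
  simp [outerNeighbors]

theorem degree_eq_one_add_card_inter_add_card_outerNeighbors (hv : v ∈ G.neighborFinset u) :
    G.degree v =
      1 + #(G.neighborFinset u ∩ G.neighborFinset v) + #(outerNeighbors G u v) := by
  have huv : G.neighborFinset v ∩ insert u (G.neighborFinset u) =
      insert u (G.neighborFinset u ∩ G.neighborFinset v) := by
    rw [inter_insert_of_mem (by simpa [adj_comm] using hv), inter_comm]
  rw [← card_neighborFinset_eq_degree, outerNeighbors,
    ← card_inter_add_card_sdiff _ (insert u (G.neighborFinset u)), huv,
    card_insert_of_notMem (by simp), add_comm 1]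

theorem sum_card_outerNeighbors_eq_sum_card_inter :
    ∑ v ∈ G.neighborFinset u, #(outerNeighbors G u v) =
      ∑ x ∈ (G.neighborFinset u).biUnion (outerNeighbors G u),
        #(G.neighborFinset u ∩ G.neighborFinset x) := by
  classical
  convert sum_card_bipartiteAbove_eq_sum_card_bipartiteBelow
    (s := G.neighborFinset u) (t := (G.neighborFinset u).biUnion (outerNeighbors G u)) G.Adj
    using 3 with v hv x
  · ext x
    simp only [mem_bipartiteAbove, mem_biUnion, mem_outerNeighbors]
    tauto
  · ext v
    simp [adj_comm]

theorem insert_union_exchangeCut (hB : B ⊆ G.neighborFinset u) :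
    insert u B ∪ exchangeCut G u B =
      insert u (G.neighborFinset u) ∪ B.biUnion (outerNeighbors G u) := by
  rw [exchangeCut, ← union_assoc, insert_union, union_sdiff_of_subset hB]

theorem disjoint_insert_exchangeCut (hB : B ⊆ G.neighborFinset u) :
    Disjoint (insert u B) (exchangeCut G u B) := by
  rw [exchangeCut, disjoint_union_right, disjoint_biUnion_right]
  refine ⟨disjoint_insert_left.2 ⟨by simp, disjoint_sdiff⟩, fun v _ => ?_⟩
  exact disjoint_sdiff.mono_left (insert_subset_insert u hB)

theorem neighborFinset_subset_insert_union_exchangeCut (hB : B ⊆ G.neighborFinset u)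
    (hv : v ∈ insert u B) : G.neighborFinset v ⊆ insert u B ∪ exchangeCut G u B := by
  rw [insert_union_exchangeCut hB]
  obtain rfl | hvB := mem_insert.1 hv
  · exact (subset_insert v _).trans subset_union_left
  · exact sdiff_le_iff.1 (subset_biUnion_of_mem (outerNeighbors G u) hvB)

theorem isVertexCut_exchangeCut (hB : B ⊆ G.neighborFinset u)
    (hne : ∃ x, x ∉ insert u (G.neighborFinset u) ∪ B.biUnion (outerNeighbors G u)) :
    IsVertexCut G (exchangeCut G u B : Set V) := by
  rw [← insert_union_exchangeCut hB] at hne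
  apply isVertexCut_of_neighborSet_subset_s8 (A := (insert u B : Finset V))
  · simp
  · exact disjoint_coe.2 (disjoint_insert_exchangeCut hB)
  · exact_mod_cast hne
  · intro v hv
    rw [← coe_neighborFinset, ← coe_union, coe_subset]
    exact neighborFinset_subset_insert_union_exchangeCut hB hv

theorem not_isAcyclic_induce_exchangeCut (hnf : ¬ ∃ S : Set V, IsForestCut G S)
    (hn : 7 < ENat.card V) (hu : G.degree u = 4) (hB : B ⊆ G.neighborFinset u)
    (hout : #(B.biUnion (outerNeighbors G u)) ≤ 2) :
    ¬ (G.induce (exchangeCut G u B : Set V)).IsAcyclic := by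
  have hclosed : #(insert u (G.neighborFinset u)) ≤ 5 :=
    (card_insert_le _ _).trans (by rw [card_neighborFinset_eq_degree, hu])
  have hcard : #(insert u (G.neighborFinset u) ∪ B.biUnion (outerNeighbors G u)) ≤ 7 :=
    (card_union_le _ _).trans (Nat.add_le_add hclosed hout)
  have hne := exists_not_mem_of_card_lt_enatCard ((Nat.cast_le.2 hcard).trans_lt hn)
  exact fun hac => hnf ⟨_, isVertexCut_exchangeCut hB hne, hac⟩

theorem three_le_card_exchangeCut (hnf : ¬ ∃ S : Set V, IsForestCut G S)
    (hn : 7 < ENat.card V) (hu : G.degree u = 4) (hB : B ⊆ G.neighborFinset u)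
    (hout : #(B.biUnion (outerNeighbors G u)) ≤ 2) : 3 ≤ #(exchangeCut G u B) := by
  by_contra! hlt
  exact not_isAcyclic_induce_exchangeCut hnf hn hu hB hout
    (isAcyclic_induce_of_card_le_three (cliqueFreeOn_of_card_lt _ hlt) hlt.le)

theorem isAcyclic_induce_neighborFinset_erase (hu : G.degree u = 4)
    (htri : G.CliqueFreeOn (G.neighborSet u) 3) (hv : v ∈ G.neighborFinset u) :
    (G.induce ((G.neighborFinset u).erase v : Set V)).IsAcyclic := by
  refine isAcyclic_induce_of_card_le_three (CliqueFreeOn.subset _ ?_ htri) ?_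
  · rw [← coe_neighborFinset]
    exact_mod_cast erase_subset v _
  · rw [card_erase_of_mem hv, card_neighborFinset_eq_degree, hu]

theorem two_le_card_inter_neighborFinset (hnf : ¬ ∃ S : Set V, IsForestCut G S)
    (hn : 7 < ENat.card V) (hu : G.degree u = 4) (htri : G.CliqueFreeOn (G.neighborSet u) 3)
    (hv : v ∈ G.neighborFinset u) : 2 ≤ #(G.neighborFinset u ∩ G.neighborFinset v) := by
  have hcut : exchangeCut G u ∅ = insert v ((G.neighborFinset u).erase v) := by
    simp [exchangeCut, insert_erase hv]
  have hcyc := not_isAcyclic_induce_exchangeCut hnf hn hu (empty_subset _) (by simp)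
  rw [hcut] at hcyc
  exact (two_le_card_inter_of_isAcyclic_induce
    (isAcyclic_induce_neighborFinset_erase hu htri hv) hcyc).trans
    (card_le_card (inter_subset_inter_right (erase_subset v _)))

theorem outerNeighbors_nonempty (hnf : ¬ ∃ S : Set V, IsForestCut G S)
    (hn : 7 < ENat.card V) (hu : G.degree u = 4) (htri : G.CliqueFreeOn (G.neighborSet u) 3)
    (hv : v ∈ G.neighborFinset u) : (outerNeighbors G u v).Nonempty := by
  by_contra! hempty
  have hcut : exchangeCut G u {v} = (G.neighborFinset u).erase v := by
    simp [exchangeCut, hempty, sdiff_singleton_eq_erase]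
  have hcyc := not_isAcyclic_induce_exchangeCut hnf hn hu (singleton_subset_iff.2 hv)
    (by simp [hempty])
  rw [hcut] at hcyc
  exact hcyc (isAcyclic_induce_neighborFinset_erase hu htri hv)

theorem three_le_card_inter_of_outerNeighbors_eq_singleton
    (hnf : ¬ ∃ S : Set V, IsForestCut G S) (hn : 7 < ENat.card V) (hu : G.degree u = 4)
    (htri : G.CliqueFreeOn (G.neighborSet u) 3) (hv : v ∈ G.neighborFinset u)
    (hx : outerNeighbors G u v = {x}) : 3 ≤ #(G.neighborFinset u ∩ G.neighborFinset x) := by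
  have hcut : exchangeCut G u {v} = insert x ((G.neighborFinset u).erase v) := by
    rw [exchangeCut, singleton_biUnion, hx, sdiff_singleton_eq_erase, union_comm, insert_eq]
  have hcyc := not_isAcyclic_induce_exchangeCut hnf hn hu (singleton_subset_iff.2 hv)
    (by simp [hx])
  rw [hcut] at hcyc
  have htwo := two_le_card_inter_of_isAcyclic_induce
    (isAcyclic_induce_neighborFinset_erase hu htri hv) hcyc
  have hvx : v ∈ G.neighborFinset u ∩ G.neighborFinset x := by
    have hxout : x ∈ outerNeighbors G u v := by simp [hx]
    exact mem_inter.2 ⟨hv, (mem_neighborFinset ..).2 (mem_outerNeighbors.1 hxout).1.symm⟩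
  rw [erase_inter, card_erase_of_mem hvx] at htwo
  lia

theorem three_le_card_biUnion_outerNeighbors (hnf : ¬ ∃ S : Set V, IsForestCut G S)
    (hn : 7 < ENat.card V) (hu : G.degree u = 4) :
    3 ≤ #((G.neighborFinset u).biUnion (outerNeighbors G u)) := by
  by_contra! hlt
  have hthree := three_le_card_exchangeCut hnf hn hu subset_rfl (by lia)
  rw [exchangeCut, sdiff_self, bot_eq_empty, empty_union] at hthree
  lia

theorem exchangeCut_neighborFinset_erase (hv : v ∈ G.neighborFinset u) :
    exchangeCut G u ((G.neighborFinset u).erase v) =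
      insert v (((G.neighborFinset u).erase v).biUnion (outerNeighbors G u)) := by
  rw [exchangeCut, sdiff_erase_self hv, insert_eq]

theorem two_le_card_biUnion_erase_outerNeighbors (hnf : ¬ ∃ S : Set V, IsForestCut G S)
    (hn : 7 < ENat.card V) (hu : G.degree u = 4) (hv : v ∈ G.neighborFinset u) :
    2 ≤ #(((G.neighborFinset u).erase v).biUnion (outerNeighbors G u)) := by
  by_contra! hlt
  have hthree := three_le_card_exchangeCut hnf hn hu (erase_subset v _) hlt.le
  rw [exchangeCut_neighborFinset_erase hv] at hthree
  have := card_insert_le v (((G.neighborFinset u).erase v).biUnion (outerNeighbors G u))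
  lia

/-- For `B = N \ {v}` the cut consists of `v` and at most two outer vertices, so a cycle in it
forces `v` to be adjacent to every outer vertex. -/
theorem three_le_card_outerNeighbors_of_card_biUnion_erase_le_two
    (hnf : ¬ ∃ S : Set V, IsForestCut G S) (hn : 7 < ENat.card V) (hu : G.degree u = 4)
    (hv : v ∈ G.neighborFinset u)
    (hout : #(((G.neighborFinset u).erase v).biUnion (outerNeighbors G u)) ≤ 2) :
    3 ≤ #(outerNeighbors G u v) := by
  set O := ((G.neighborFinset u).erase v).biUnion (outerNeighbors G u) with hO
  have hcyc := not_isAcyclic_induce_exchangeCut hnf hn hu (erase_subset v _) hout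
  rw [exchangeCut_neighborFinset_erase hv, ← hO] at hcyc
  have hacy : (G.induce (O : Set V)).IsAcyclic :=
    isAcyclic_induce_of_card_le_three (cliqueFreeOn_of_card_lt _ (by lia)) (by lia)
  have htwo := two_le_card_inter_of_isAcyclic_induce hacy hcyc
  have hadj : O ⊆ G.neighborFinset v := by
    rw [← eq_of_subset_of_card_le inter_subset_left (hout.trans htwo)]
    exact inter_subset_right
  have hsub : (G.neighborFinset u).biUnion (outerNeighbors G u) ⊆ outerNeighbors G u v := by
    intro x hx
    obtain ⟨w, hw, hxw⟩ := mem_biUnion.1 hx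
    obtain rfl | hwv := eq_or_ne w v
    · exact hxw
    · have hxO : x ∈ O := mem_biUnion.2 ⟨w, mem_erase.2 ⟨hwv, hw⟩, hxw⟩
      exact mem_outerNeighbors.2
        ⟨(mem_neighborFinset ..).1 (hadj hxO), (mem_outerNeighbors.1 hxw).2⟩
  exact (three_le_card_biUnion_outerNeighbors hnf hn hu).trans (card_le_card hsub)

theorem seven_le_sum_of_outerNeighbors_eq_singleton_of_ne (hnf : ¬ ∃ S : Set V, IsForestCut G S)
    (hn : 7 < ENat.card V) (hu : G.degree u = 4) (htri : G.CliqueFreeOn (G.neighborSet u) 3)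
    (hv : v ∈ G.neighborFinset u) (hw : w ∈ G.neighborFinset u)
    (hx : outerNeighbors G u v = {x}) (hy : outerNeighbors G u w = {y}) (hxy : x ≠ y) :
    7 ≤ ∑ v ∈ G.neighborFinset u, #(outerNeighbors G u v) := by
  set O := (G.neighborFinset u).biUnion (outerNeighbors G u)
  have hxO : x ∈ O := mem_biUnion.2 ⟨v, hv, by simp [hx]⟩
  have hyO : y ∈ O := mem_biUnion.2 ⟨w, hw, by simp [hy]⟩
  obtain ⟨z, hzO, hz⟩ : ∃ z ∈ O, z ∉ ({x, y} : Finset V) :=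
    exists_mem_notMem_of_card_lt_card
      (card_le_two.trans_lt (three_le_card_biUnion_outerNeighbors hnf hn hu))
  have hzpos : 0 < #(G.neighborFinset u ∩ G.neighborFinset z) := by
    obtain ⟨a, ha, hza⟩ := mem_biUnion.1 hzO
    exact card_pos.2 ⟨a, mem_inter.2 ⟨ha, by simpa using (mem_outerNeighbors.1 hza).1.symm⟩⟩
  have hx3 := three_le_card_inter_of_outerNeighbors_eq_singleton hnf hn hu htri hv hx
  have hy3 := three_le_card_inter_of_outerNeighbors_eq_singleton hnf hn hu htri hw hy
  calc 7 ≤ ∑ p ∈ {z, x, y}, #(G.neighborFinset u ∩ G.neighborFinset p) := by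
        rw [sum_insert hz, sum_pair hxy]; lia
    _ ≤ ∑ p ∈ O, #(G.neighborFinset u ∩ G.neighborFinset p) :=
        sum_le_sum_of_subset (insert_subset hzO (insert_subset hxO (singleton_subset_iff.2 hyO)))
    _ = _ := sum_card_outerNeighbors_eq_sum_card_inter.symm

theorem three_le_card_insert_outerNeighbors (hnf : ¬ ∃ S : Set V, IsForestCut G S)
    (hn : 7 < ENat.card V) (hu : G.degree u = 4) (htri : G.CliqueFreeOn (G.neighborSet u) 3)
    (hN : G.neighborFinset u = {v, w, a, b}) (hav : a ≠ v) (haw : a ≠ w) (hab : a ≠ b)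
    (hvx : outerNeighbors G u v = {x}) (hwx : outerNeighbors G u w = {x})
    (hsum : ∑ v ∈ G.neighborFinset u, #(outerNeighbors G u v) < 7)
    (hle : #(outerNeighbors G u a) + #(outerNeighbors G u b) ≤ 4) :
    3 ≤ #(insert x (outerNeighbors G u b)) := by
  have ha : a ∈ G.neighborFinset u := by simp [hN]
  have hb : b ∈ G.neighborFinset u := by simp [hN]
  have herase : (G.neighborFinset u).erase a = {v, w, b} := by grind
  have hout : ((G.neighborFinset u).erase a).biUnion (outerNeighbors G u) =
      insert x (outerNeighbors G u b) := by
    rw [herase, biUnion_insert, biUnion_insert, singleton_biUnion, hvx, hwx, ← insert_eq,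
      ← insert_eq, insert_idem]
  have htwo := two_le_card_biUnion_erase_outerNeighbors hnf hn hu ha
  by_contra! hlt
  have hthree := three_le_card_outerNeighbors_of_card_biUnion_erase_le_two hnf hn hu ha
    (by rw [hout]; lia)
  obtain ⟨y, hy⟩ : ∃ y, outerNeighbors G u b = {y} := by
    have := (outerNeighbors_nonempty hnf hn hu htri hb).card_pos
    exact card_eq_one.1 (by lia)
  have hxy : x ≠ y := by
    rintro rfl
    simp [hout, hy] at htwo
  exact hsum.not_ge
    (seven_le_sum_of_outerNeighbors_eq_singleton_of_ne hnf hn hu htri (by simp [hN]) hb hvx hy hxy)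

theorem seven_le_sum_of_outerNeighbors_eq_singleton_of_eq (hnf : ¬ ∃ S : Set V, IsForestCut G S)
    (hn : 7 < ENat.card V) (hu : G.degree u = 4) (htri : G.CliqueFreeOn (G.neighborSet u) 3)
    (hv : v ∈ G.neighborFinset u) (hw : w ∈ G.neighborFinset u) (hvw : v ≠ w)
    (hvx : outerNeighbors G u v = {x}) (hwx : outerNeighbors G u w = {x}) :
    7 ≤ ∑ v ∈ G.neighborFinset u, #(outerNeighbors G u v) := by
  obtain ⟨a, b, hab, hav, haw, hbv, hbw, hN⟩ :=
    exists_eq_insert_of_mem_of_card_eq_four (by rwa [card_neighborFinset_eq_degree]) hv hw hvw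
  have hsum : ∑ v ∈ G.neighborFinset u, #(outerNeighbors G u v) =
      2 + #(outerNeighbors G u a) + #(outerNeighbors G u b) := by
    rw [hN, sum_insert (by grind), sum_insert (by grind), sum_pair hab, hvx, hwx,
      card_singleton]
    lia
  by_contra! hlt
  have ha3 := three_le_card_insert_outerNeighbors hnf hn hu htri (by rw [hN, pair_comm])
    hbv hbw hab.symm hvx hwx hlt (by lia)
  have hb3 := three_le_card_insert_outerNeighbors hnf hn hu htri hN hav haw hab hvx hwx hlt
    (by lia)
  have hle_a := card_insert_le x (outerNeighbors G u a)
  have hle_b := card_insert_le x (outerNeighbors G u b)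
  have hxa : x ∉ outerNeighbors G u a := fun hx => by rw [insert_eq_of_mem hx] at ha3; lia
  have hxb : x ∉ outerNeighbors G u b := fun hx => by rw [insert_eq_of_mem hx] at hb3; lia
  obtain ⟨-, hxu, hux⟩ := mem_outerNeighbors.1 (show x ∈ outerNeighbors G u v by simp [hvx])
  have hsub : G.neighborFinset u ∩ G.neighborFinset x ⊆ {v, w} := by
    intro c hc
    obtain ⟨hcu, hcx⟩ := mem_inter.1 hc
    have hxc : x ∈ outerNeighbors G u c :=
      mem_outerNeighbors.2 ⟨((mem_neighborFinset ..).1 hcx).symm, hxu, hux⟩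
    grind
  have hthree := three_le_card_inter_of_outerNeighbors_eq_singleton hnf hn hu htri hv hvx
  exact (hthree.trans (card_le_card hsub)).not_gt (Nat.lt_succ_of_le card_le_two)

theorem seven_le_sum_card_outerNeighbors (hnf : ¬ ∃ S : Set V, IsForestCut G S)
    (hn : 7 < ENat.card V) (hu : G.degree u = 4) (htri : G.CliqueFreeOn (G.neighborSet u) 3) :
    7 ≤ ∑ v ∈ G.neighborFinset u, #(outerNeighbors G u v) := by
  by_cases hsingle : #{v ∈ G.neighborFinset u | #(outerNeighbors G u v) = 1} ≤ 1
  · have hle : ∑ _v ∈ G.neighborFinset u, 2 ≤ ∑ v ∈ G.neighborFinset u,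
        (#(outerNeighbors G u v) + if #(outerNeighbors G u v) = 1 then 1 else 0) :=
      sum_le_sum fun v hv => by
        have := (outerNeighbors_nonempty hnf hn hu htri hv).card_pos
        split_ifs <;> lia
    rw [sum_add_distrib, ← card_filter, sum_const, card_neighborFinset_eq_degree, hu] at hle
    lia
  · obtain ⟨v, hv, w, hw, hvw⟩ := one_lt_card.1 (not_le.1 hsingle)
    obtain ⟨hv, hv1⟩ := mem_filter.1 hv
    obtain ⟨hw, hw1⟩ := mem_filter.1 hw
    obtain ⟨x, hx⟩ := card_eq_one.1 hv1
    obtain ⟨y, hy⟩ := card_eq_one.1 hw1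
    obtain rfl | hxy := eq_or_ne x y
    · exact seven_le_sum_of_outerNeighbors_eq_singleton_of_eq hnf hn hu htri hv hw hvw hx hy
    · exact seven_le_sum_of_outerNeighbors_eq_singleton_of_ne hnf hn hu htri hv hw hx hy hxy

end OuterNeighbors

theorem degree_sum_of_neighbors_without_triangle_general
    {V : Type*} (G : SimpleGraph V) [G.LocallyFinite] (hn : 7 < ENat.card V)
    (hnf : ¬ ∃ S : Set V, IsForestCut G S) (u : V) (hu : G.degree u = 4)
    (htri : G.CliqueFreeOn (G.neighborSet u) 3) :
    19 ≤ ∑ v ∈ G.neighborFinset u, G.degree v := by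
  classical
  calc 19 ≤ ∑ _v ∈ G.neighborFinset u, 3 + ∑ v ∈ G.neighborFinset u, #(outerNeighbors G u v) := by
        have hseven := seven_le_sum_card_outerNeighbors hnf hn hu htri
        rw [sum_const, card_neighborFinset_eq_degree, hu, smul_eq_mul]
        lia
    _ = ∑ v ∈ G.neighborFinset u, (3 + #(outerNeighbors G u v)) := sum_add_distrib.symm
    _ ≤ ∑ v ∈ G.neighborFinset u, G.degree v := sum_le_sum fun v hv => by
        rw [degree_eq_one_add_card_inter_add_card_outerNeighbors hv]
        have := two_le_card_inter_neighborFinset hnf hn hu htri hv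
        lia

/-- In a `4`-connected graph of order greater than `8` with no forest cut, if `u` is a
vertex of degree `4` whose neighborhood contains no triangle, then the degrees of the
neighbors of `u` sum to at least `19`. -/
theorem degree_sum_of_neighbors_without_triangle
    {V : Type*} [Fintype V] [DecidableEq V] (G : SimpleGraph V) [DecidableRel G.Adj]
    (hconn : KConnected 4 G) (hn : 8 < Fintype.card V)
    (hnf : ¬ ∃ S : Set V, IsForestCut G S)
    (u : V) (hu : G.degree u = 4)
    (htri : ¬ ∃ a ∈ G.neighborSet u, ∃ b ∈ G.neighborSet u, ∃ c ∈ G.neighborSet u,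
      G.Adj a b ∧ G.Adj b c ∧ G.Adj a c) :
    19 ≤ ∑ v ∈ G.neighborFinset u, G.degree v :=
  degree_sum_of_neighbors_without_triangle_general G
    (by rw [ENat.card_eq_coe_fintype_card]; exact_mod_cast hn.le) hnf u hu
    (cliqueFreeOn_three_iff.2 htri)
end
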